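/- arXiv:1004.4253 — 8 statements merged into one kernel-verified Lean document; each statement's English description precedes it below -/
import Mathlib

section
/- The absolute value map on the right-angled Artin group A_Γ is well-defined: if v_1^{e_1} ⋯ v_n^{e_n} and u_1^{f_1} ⋯ u_n^{f_n} (with v_i, u_i ∈ V and e_i, f_i ∈ {+1, −1}) are two geodesic words representing the same element g ∈ A_Γ (so n = |g|), then the positive words v_1 v_2 ⋯ v_n and u_1 u_2 ⋯ u_n represent the same element of A_Γ. -/
/-- The commutator relators of the right-angled Artin group on the graph `Γ`. -/
def raagRels {V : Type*} (Γ : SimpleGraph V) : Set (FreeGroup V) :=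
  {r | ∃ u v : V, Γ.Adj u v ∧
    r = FreeGroup.of u * FreeGroup.of v * (FreeGroup.of u)⁻¹ * (FreeGroup.of v)⁻¹}

/-- The right-angled Artin group `A_Γ` on the graph `Γ`. -/
abbrev RAAG {V : Type*} (Γ : SimpleGraph V) : Type _ :=
  PresentedGroup (raagRels Γ)

/-- The generator of `A_Γ` corresponding to the vertex `v`. -/
def RAAG.gen {V : Type*} (Γ : SimpleGraph V) (v : V) : RAAG Γ :=
  PresentedGroup.of v

/-- Word length of `g` with respect to a generating set `X`: the least `n` such that
`g` is a product of `n` elements of `X ∪ X⁻¹`. -/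
noncomputable def wlen {G : Type*} [Group G] (X : Set G) (g : G) : ℕ :=
  sInf {n | ∃ l : List G, l.length = n ∧ (∀ x ∈ l, x ∈ X ∨ x⁻¹ ∈ X) ∧ l.prod = g}

/-- Word length in `A_Γ` with respect to the vertex generating set. -/
noncomputable def RAAG.wordLength {V : Type*} (Γ : SimpleGraph V) (g : RAAG Γ) : ℕ :=
  wlen (Set.range (RAAG.gen Γ)) g

/-- The letter `v^e` (with `e = true` for `v` and `e = false` for `v⁻¹`). -/
def RAAG.letter {V : Type*} (Γ : SimpleGraph V) (v : V) (e : Bool) : RAAG Γ :=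
  if e then RAAG.gen Γ v else (RAAG.gen Γ v)⁻¹

namespace RAAGProof

variable {V : Type*}

/-- Formal inverse of a letter. -/
def inv (c : V × Bool) : V × Bool := (c.1, !c.2)

theorem inv_inv (c : V × Bool) : inv (inv c) = c := by simp [inv]

/-- Trace equivalence. -/
inductive Eqv (Γ : SimpleGraph V) : List (V × Bool) → List (V × Bool) → Prop
  | refl (w) : Eqv Γ w w
  | cons (a) {w w'} : Eqv Γ w w' → Eqv Γ (a :: w) (a :: w')
  | swap (a b w) : Γ.Adj a.1 b.1 → Eqv Γ (a :: b :: w) (b :: a :: w)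
  | trans {x y z} : Eqv Γ x y → Eqv Γ y z → Eqv Γ x z

theorem Eqv.symm {Γ : SimpleGraph V} {x y} (h : Eqv Γ x y) : Eqv Γ y x := by
  induction h with
  | refl w => exact .refl w
  | cons a _ ih => exact .cons a ih
  | swap a b w h => exact .swap b a w h.symm
  | trans _ _ h1 h2 => exact .trans h2 h1

open Classical in
/-- Remove the letter `c` from the front of the trace, if possible. -/
noncomputable def rem (Γ : SimpleGraph V) (c : V × Bool) :
    List (V × Bool) → Option (List (V × Bool))
  | [] => none
  | d :: w => if d = c then some w else
      if Γ.Adj d.1 c.1 then (rem Γ c w).map (List.cons d) else none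

theorem rem_self (Γ : SimpleGraph V) (c w) : rem Γ c (c :: w) = some w := by simp [rem]

theorem rem_adj {Γ : SimpleGraph V} {c d : V × Bool} (h : Γ.Adj d.1 c.1) (w) :
    rem Γ c (d :: w) = (rem Γ c w).map (List.cons d) := by
  have : d ≠ c := by rintro rfl; exact Γ.irrefl h
  simp [rem, this, h]

theorem rem_none {Γ : SimpleGraph V} {c d : V × Bool} (h : ¬ Γ.Adj d.1 c.1) (h' : d ≠ c) (w) :
    rem Γ c (d :: w) = none := by
  simp [rem, h, h']

/-- Lifted equivalence on options. -/
def OEqv (Γ : SimpleGraph V) (x y : Option (List (V × Bool))) : Prop :=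
  (x = none ∧ y = none) ∨ ∃ a b, x = some a ∧ y = some b ∧ Eqv Γ a b

theorem OEqv.refl (Γ : SimpleGraph V) (x) : OEqv Γ x x := by
  cases x with
  | none => exact .inl ⟨rfl, rfl⟩
  | some a => exact .inr ⟨a, a, rfl, rfl, .refl a⟩

theorem OEqv.map {Γ : SimpleGraph V} {x y} (h : OEqv Γ x y) (d) :
    OEqv Γ (x.map (List.cons d)) (y.map (List.cons d)) := by
  rcases h with ⟨rfl, rfl⟩ | ⟨a, b, rfl, rfl, h⟩
  · exact .inl ⟨rfl, rfl⟩
  · exact .inr ⟨_, _, rfl, rfl, .cons d h⟩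

theorem rem_congr {Γ : SimpleGraph V} {w w'} (h : Eqv Γ w w') (c) :
    OEqv Γ (rem Γ c w) (rem Γ c w') := by
  induction h with
  | refl w => exact .refl _ _
  | @cons a w w' hw ih =>
    by_cases h1 : a = c
    · subst h1; rw [rem_self, rem_self]; exact .inr ⟨_, _, rfl, rfl, hw⟩
    · by_cases h2 : Γ.Adj a.1 c.1
      · rw [rem_adj h2, rem_adj h2]; exact ih.map a
      · rw [rem_none h2 h1, rem_none h2 h1]; exact .refl _ _
  | swap a b w h =>
    by_cases h1 : a = c
    · subst h1; rw [rem_self, rem_adj h.symm, rem_self]; exact .refl _ _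
    by_cases h2 : b = c
    · subst h2; rw [rem_self, rem_adj h, rem_self]; exact .refl _ _
    by_cases h3 : Γ.Adj a.1 c.1
    · by_cases h4 : Γ.Adj b.1 c.1
      · rw [rem_adj h3, rem_adj h4, rem_adj h4, rem_adj h3]
        cases hx : rem Γ c w with
        | none => exact .inl ⟨rfl, rfl⟩
        | some x => exact .inr ⟨_, _, rfl, rfl, .swap a b x h⟩
      · rw [rem_adj h3, rem_none h4 h2, rem_none h4 h2]; exact .inl ⟨rfl, rfl⟩
    · by_cases h4 : Γ.Adj b.1 c.1
      · rw [rem_adj h4, rem_none h3 h1, rem_none h3 h1]; exact .inl ⟨rfl, rfl⟩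
      · rw [rem_none h3 h1, rem_none h4 h2]; exact .inl ⟨rfl, rfl⟩
  | trans _ _ h1 h2 =>
    rcases h1 with ⟨ha, hb⟩ | ⟨a, b, ha, hb, h⟩
    · rcases h2 with ⟨ha', hb'⟩ | ⟨a', b', ha', hb', h'⟩
      · exact .inl ⟨ha, hb'⟩
      · simp [hb] at ha'
    · rcases h2 with ⟨ha', hb'⟩ | ⟨a', b', ha', hb', h'⟩
      · simp [hb] at ha'
      · rw [hb] at ha'; cases ha'
        exact .inr ⟨_, _, ha, hb', h.trans h'⟩

theorem rem_some {Γ : SimpleGraph V} {c w w'} (h : rem Γ c w = some w') :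
    Eqv Γ w (c :: w') := by
  induction w generalizing w' with
  | nil => simp [rem] at h
  | cons d w ih =>
    by_cases h1 : d = c
    · subst h1; rw [rem_self] at h; cases h; exact .refl _
    by_cases h2 : Γ.Adj d.1 c.1
    · rw [rem_adj h2] at h
      cases hx : rem Γ c w with
      | none => simp [hx] at h
      | some x =>
        rw [hx] at h; cases h
        exact (Eqv.cons d (ih hx)).trans (.swap d c x h2)
    · rw [rem_none h2 h1] at h; cases h

theorem rem_none_congr {Γ : SimpleGraph V} {w w'} (h : Eqv Γ w w') {c}
    (hn : rem Γ c w = none) : rem Γ c w' = none := by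
  rcases rem_congr h c with ⟨_, hb⟩ | ⟨a, b, ha, _, _⟩
  · exact hb
  · simp [hn] at ha

theorem rem_some_congr {Γ : SimpleGraph V} {w w'} (h : Eqv Γ w w') {c x}
    (hn : rem Γ c w = some x) : ∃ y, rem Γ c w' = some y ∧ Eqv Γ x y := by
  rcases rem_congr h c with ⟨ha, _⟩ | ⟨a, b, ha, hb, hab⟩
  · simp [hn] at ha
  · rw [hn] at ha; cases ha; exact ⟨b, hb, hab⟩

/-- Reduced words. -/
def Red (Γ : SimpleGraph V) : List (V × Bool) → Prop
  | [] => True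
  | a :: w => rem Γ (inv a) w = none ∧ Red Γ w

theorem Red.congr {Γ : SimpleGraph V} {w w'} (h : Eqv Γ w w') (hr : Red Γ w) : Red Γ w' := by
  induction h with
  | refl w => exact hr
  | cons a hw ih => exact ⟨rem_none_congr hw hr.1, ih hr.2⟩
  | swap a b w h =>
    obtain ⟨h1, h2, h3⟩ := hr
    have e1 : Γ.Adj b.1 (inv a).1 := h.symm
    have e2 : Γ.Adj a.1 (inv b).1 := h
    rw [rem_adj e1] at h1
    refine ⟨?_, ?_, h3⟩
    · rw [rem_adj e2, h2]; rfl
    · simpa using h1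
  | trans _ _ h1 h2 => exact h2 (h1 hr)

/-- Left multiplication with reduction. -/
noncomputable def act (Γ : SimpleGraph V) (a : V × Bool) (w : List (V × Bool)) :
    List (V × Bool) := (rem Γ (inv a) w).getD (a :: w)

theorem act_none {Γ : SimpleGraph V} {a w} (h : rem Γ (inv a) w = none) :
    act Γ a w = a :: w := by simp [act, h]

theorem act_some {Γ : SimpleGraph V} {a w x} (h : rem Γ (inv a) w = some x) :
    act Γ a w = x := by simp [act, h]

theorem act_congr {Γ : SimpleGraph V} {w w'} (h : Eqv Γ w w') (a) :
    Eqv Γ (act Γ a w) (act Γ a w') := by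
  cases hx : rem Γ (inv a) w with
  | none => rw [act_none hx, act_none (rem_none_congr h hx)]; exact .cons a h
  | some x =>
    obtain ⟨y, hy, hxy⟩ := rem_some_congr h hx
    rw [act_some hx, act_some hy]; exact hxy

theorem act_red {Γ : SimpleGraph V} {w} (h : Red Γ w) (a) : Red Γ (act Γ a w) := by
  cases hx : rem Γ (inv a) w with
  | none => rw [act_none hx]; exact ⟨hx, h⟩
  | some x => rw [act_some hx]; exact (h.congr (rem_some hx)).2

theorem act_inv {Γ : SimpleGraph V} {w} (h : Red Γ w) (a) :
    Eqv Γ (act Γ (inv a) (act Γ a w)) w := by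
  cases hx : rem Γ (inv a) w with
  | none =>
    rw [act_none hx, act_some (x := w)]
    · exact .refl _
    · rw [inv_inv, rem_self]
  | some x =>
    have := rem_some hx
    rw [act_some hx, act_none (h.congr this).1]
    exact this.symm

theorem act_comm {Γ : SimpleGraph V} {a b : V × Bool} (h : Γ.Adj a.1 b.1) (w) :
    Eqv Γ (act Γ a (act Γ b w)) (act Γ b (act Γ a w)) := by
  have aux : ∀ {a b : V × Bool}, Γ.Adj a.1 b.1 → ∀ {x}, rem Γ (inv a) w = some x →
      rem Γ (inv b) w = none → Eqv Γ (act Γ a (act Γ b w)) (act Γ b (act Γ a w)) := by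
    intro a b h x hx hy
    have e1 : Γ.Adj b.1 (inv a).1 := h.symm
    have e3 : Γ.Adj (inv a).1 (inv b).1 := h
    have h1 := rem_none_congr (rem_some hx) hy
    rw [rem_adj e3] at h1
    rw [act_none hy, act_some hx, act_none (a := b) (w := x) (by simpa using h1),
      act_some (x := b :: x)]
    · exact .refl _
    · rw [rem_adj e1, hx]; rfl
  have e1 : Γ.Adj b.1 (inv a).1 := h.symm
  have e2 : Γ.Adj a.1 (inv b).1 := h
  have e3 : Γ.Adj (inv a).1 (inv b).1 := h
  cases hx : rem Γ (inv a) w with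
  | none =>
    cases hy : rem Γ (inv b) w with
    | none =>
      rw [act_none hx, act_none hy, act_none, act_none]
      · exact .swap a b w h
      · rw [rem_adj e2, hy]; rfl
      · rw [rem_adj e1, hx]; rfl
    | some y => exact (aux h.symm hy hx).symm
  | some x =>
    cases hy : rem Γ (inv b) w with
    | none => exact aux h hx hy
    | some y =>
      obtain ⟨z, hz, hyz⟩ := rem_some_congr (rem_some hx) hy
      rw [rem_adj e3] at hz
      cases hu : rem Γ (inv b) x with
      | none => simp [hu] at hz
      | some u =>
        rw [hu] at hz; cases hz
        rw [act_some hx, act_some hy, act_some hu]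
        have := act_congr hyz a
        rwa [act_some (x := u) (rem_self Γ (inv a) u)] at this

/-- Setoid of trace equivalence on reduced words. -/
def std (Γ : SimpleGraph V) : Setoid {w : List (V × Bool) // Red Γ w} where
  r x y := Eqv Γ x.1 y.1
  iseqv := ⟨fun x => .refl x.1, fun h => h.symm, fun h h' => h.trans h'⟩

/-- Letter action on reduced traces. -/
noncomputable def qact (Γ : SimpleGraph V) (a : V × Bool) :
    Quotient (std Γ) → Quotient (std Γ) :=
  Quotient.map' (s₁ := std Γ) (s₂ := std Γ) (fun w => ⟨act Γ a w.1, act_red w.2 a⟩)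
    (fun _ _ h => act_congr h a)

theorem qact_inv (Γ : SimpleGraph V) (a : V × Bool) (x) : qact Γ (inv a) (qact Γ a x) = x := by
  induction x using Quotient.inductionOn with
  | h w => exact Quotient.sound (s := std Γ) (act_inv w.2 a)

theorem qact_comm {Γ : SimpleGraph V} {a b : V × Bool} (h : Γ.Adj a.1 b.1) (x) :
    qact Γ a (qact Γ b x) = qact Γ b (qact Γ a x) := by
  induction x using Quotient.inductionOn with
  | h w => exact Quotient.sound (s := std Γ) (act_comm h w.1)

/-- Generator permutation. -/
noncomputable def genPerm (Γ : SimpleGraph V) (v : V) : Equiv.Perm (Quotient (std Γ)) where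
  toFun := qact Γ (v, true)
  invFun := qact Γ (v, false)
  left_inv x := qact_inv Γ (v, true) x
  right_inv x := qact_inv Γ (v, false) x

theorem genPerm_rels (Γ : SimpleGraph V) :
    ∀ r ∈ raagRels Γ, FreeGroup.lift (genPerm Γ) r = 1 := by
  rintro r ⟨u, v, h, rfl⟩
  have : genPerm Γ u * genPerm Γ v = genPerm Γ v * genPerm Γ u := by
    ext x
    exact qact_comm (a := (u, true)) (b := (v, true)) h x
  simp [this]

/-- The permutation representation. -/
noncomputable def rep (Γ : SimpleGraph V) : RAAG Γ →* Equiv.Perm (Quotient (std Γ)) :=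
  PresentedGroup.toGroup (genPerm_rels Γ)

theorem rep_letter (Γ : SimpleGraph V) (v : V) (e : Bool) (x) :
    rep Γ (RAAG.letter Γ v e) x = qact Γ (v, e) x := by
  have h : rep Γ (RAAG.gen Γ v) = genPerm Γ v := PresentedGroup.toGroup.of _
  cases e
  · simp only [RAAG.letter, Bool.false_eq_true, if_false, map_inv, h]; rfl
  · simp only [RAAG.letter, if_true, h]; rfl

/-- Normal form of a word. -/
noncomputable def nf (Γ : SimpleGraph V) (w : List (V × Bool)) : List (V × Bool) :=
  w.foldr (act Γ) []

theorem nf_red (Γ : SimpleGraph V) (w) : Red Γ (nf Γ w) := by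
  induction w with
  | nil => trivial
  | cons a w ih => exact act_red ih a

theorem rep_word (Γ : SimpleGraph V) (w : List (V × Bool)) :
    rep Γ (w.map fun p => RAAG.letter Γ p.1 p.2).prod (Quotient.mk (std Γ) ⟨[], trivial⟩) =
      Quotient.mk (std Γ) ⟨nf Γ w, nf_red Γ w⟩ := by
  induction w with
  | nil => simp [nf]
  | cons a w ih =>
    rw [List.map_cons, List.prod_cons, map_mul, Equiv.Perm.mul_apply, ih, rep_letter]
    rfl

theorem gen_comm {Γ : SimpleGraph V} {u v : V} (h : Γ.Adj u v) :
    Commute (RAAG.gen Γ u) (RAAG.gen Γ v) := by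
  have : (PresentedGroup.mk (raagRels Γ)) (FreeGroup.of u * FreeGroup.of v * (FreeGroup.of u)⁻¹ *
      (FreeGroup.of v)⁻¹) = 1 :=
    PresentedGroup.one_of_mem ⟨u, v, h, rfl⟩
  simp only [map_mul, map_inv] at this
  have h2 := mul_inv_eq_one.mp this
  exact mul_inv_eq_iff_eq_mul.mp h2

theorem letter_comm {Γ : SimpleGraph V} {u v : V} (h : Γ.Adj u v) (e f) :
    Commute (RAAG.letter Γ u e) (RAAG.letter Γ v f) := by
  have := gen_comm h
  cases e <;> cases f <;> simp [RAAG.letter, this]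

theorem Eqv.prod_letter {Γ : SimpleGraph V} {w w'} (h : Eqv Γ w w') :
    (w.map fun p => RAAG.letter Γ p.1 p.2).prod = (w'.map fun p => RAAG.letter Γ p.1 p.2).prod := by
  induction h with
  | refl w => rfl
  | cons a _ ih => simp only [List.map_cons, List.prod_cons, ih]
  | swap a b w h =>
    simp only [List.map_cons, List.prod_cons, ← mul_assoc, (letter_comm h a.2 b.2).eq]
  | trans _ _ h1 h2 => exact h1.trans h2

theorem Eqv.prod_gen {Γ : SimpleGraph V} {w w'} (h : Eqv Γ w w') :
    (w.map fun p => RAAG.gen Γ p.1).prod = (w'.map fun p => RAAG.gen Γ p.1).prod := by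
  induction h with
  | refl w => rfl
  | cons a _ ih => simp only [List.map_cons, List.prod_cons, ih]
  | swap a b w h =>
    simp only [List.map_cons, List.prod_cons, ← mul_assoc, (gen_comm h).eq]
  | trans _ _ h1 h2 => exact h1.trans h2

theorem letter_inv (Γ : SimpleGraph V) (a : V × Bool) :
    RAAG.letter Γ a.1 a.2 * RAAG.letter Γ (inv a).1 (inv a).2 = 1 := by
  obtain ⟨v, e⟩ := a
  cases e <;> simp [RAAG.letter, inv]

theorem Eqv.length {Γ : SimpleGraph V} {w w'} (h : Eqv Γ w w') : w.length = w'.length := by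
  induction h with
  | refl w => rfl
  | cons a _ ih => simp [ih]
  | swap a b w h => simp
  | trans _ _ h1 h2 => exact h1.trans h2

theorem nf_prod (Γ : SimpleGraph V) (w) :
    ((nf Γ w).map fun p => RAAG.letter Γ p.1 p.2).prod =
      (w.map fun p => RAAG.letter Γ p.1 p.2).prod := by
  induction w with
  | nil => rfl
  | cons a w ih =>
    rw [List.map_cons, List.prod_cons, ← ih]
    change ((act Γ a (nf Γ w)).map fun p => RAAG.letter Γ p.1 p.2).prod = _
    cases hx : rem Γ (inv a) (nf Γ w) with
    | none => rw [act_none hx, List.map_cons, List.prod_cons]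
    | some x =>
      rw [act_some hx, (rem_some hx).prod_letter, List.map_cons, List.prod_cons, ← mul_assoc,
        letter_inv, one_mul]

theorem nf_length (Γ : SimpleGraph V) (w) :
    (nf Γ w).length ≤ w.length ∧ ((nf Γ w).length = w.length → nf Γ w = w) := by
  induction w with
  | nil => exact ⟨le_rfl, fun _ => rfl⟩
  | cons a w ih =>
    have e : nf Γ (a :: w) = act Γ a (nf Γ w) := rfl
    rw [e]
    cases hx : rem Γ (inv a) (nf Γ w) with
    | none =>
      rw [act_none hx]
      simp only [List.length_cons]
      refine ⟨by omega, fun h => ?_⟩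
      rw [ih.2 (by omega)]
    | some x =>
      have := (rem_some hx).length
      rw [act_some hx]
      simp only [List.length_cons] at *
      exact ⟨by omega, fun h => by omega⟩

theorem nf_geod {Γ : SimpleGraph V} {g : RAAG Γ} {w : List (V × Bool)}
    (h : (w.map fun p => RAAG.letter Γ p.1 p.2).prod = g)
    (hl : w.length = RAAG.wordLength Γ g) : nf Γ w = w := by
  have h1 := nf_length Γ w
  refine h1.2 (le_antisymm h1.1 ?_)
  rw [hl]
  refine Nat.sInf_le ⟨(nf Γ w).map fun p => RAAG.letter Γ p.1 p.2, by simp, ?_, ?_⟩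
  · intro x hx
    obtain ⟨⟨v, e⟩, _, rfl⟩ := List.mem_map.mp hx
    cases e
    · right; exact ⟨v, by simp [RAAG.letter]⟩
    · left; exact ⟨v, by simp [RAAG.letter]⟩
  · rw [nf_prod, h]

end RAAGProof

theorem raag_abs_well_defined {V : Type*} [Fintype V] (Γ : SimpleGraph V)
    (g : RAAG Γ) (w₁ w₂ : List (V × Bool))
    (h₁ : (w₁.map fun p => RAAG.letter Γ p.1 p.2).prod = g)
    (h₂ : (w₂.map fun p => RAAG.letter Γ p.1 p.2).prod = g)
    (hl₁ : w₁.length = RAAG.wordLength Γ g)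
    (hl₂ : w₂.length = RAAG.wordLength Γ g) :
    (w₁.map fun p => RAAG.gen Γ p.1).prod = (w₂.map fun p => RAAG.gen Γ p.1).prod := by
  have e : Quotient.mk (RAAGProof.std Γ) ⟨RAAGProof.nf Γ w₁, RAAGProof.nf_red Γ w₁⟩ =
      Quotient.mk (RAAGProof.std Γ) ⟨RAAGProof.nf Γ w₂, RAAGProof.nf_red Γ w₂⟩ := by
    rw [← RAAGProof.rep_word, ← RAAGProof.rep_word, h₁, h₂]
  have e2 : RAAGProof.Eqv Γ (RAAGProof.nf Γ w₁) (RAAGProof.nf Γ w₂) :=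
    Quotient.exact (s := RAAGProof.std Γ) e
  rw [RAAGProof.nf_geod h₁ hl₁, RAAGProof.nf_geod h₂ hl₂] at e2
  exact e2.prod_gen
end

section
/- The absolute value map abs : A_Γ → A_Γ preserves adjacency: if g ∈ A_Γ, v ∈ V, e ∈ {+1, −1} and |g v^e| = |g| + 1, then abs(g v^e) = abs(g)·v. Consequently abs is 1-Lipschitz for the word metric: for all g₁, g₂ ∈ A_Γ, d(abs(g₁), abs(g₂)) ≤ d(g₁, g₂). -/
namespace RAAG

/-- The element represented by a word. -/
def ev {V : Type*} (Γ : SimpleGraph V) (w : List (V × Bool)) : RAAG Γ :=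
  (w.map fun p => RAAG.letter Γ p.1 p.2).prod

lemma ev_append {V : Type*} (Γ : SimpleGraph V) (w w' : List (V × Bool)) :
    ev Γ (w ++ w') = ev Γ w * ev Γ w' := by simp [ev]

lemma ev_single {V : Type*} (Γ : SimpleGraph V) (v : V) (e : Bool) :
    ev Γ [(v, e)] = letter Γ v e := by simp [ev]

lemma letter_not {V : Type*} (Γ : SimpleGraph V) (v : V) (e : Bool) :
    letter Γ v (!e) = (letter Γ v e)⁻¹ := by cases e <;> simp [letter]

lemma wordLength_le {V : Type*} (Γ : SimpleGraph V) (w : List (V × Bool)) :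
    wordLength Γ (ev Γ w) ≤ w.length := by
  refine Nat.sInf_le ⟨w.map fun p => letter Γ p.1 p.2, by simp, ?_, rfl⟩
  intro x hx
  obtain ⟨⟨v, e⟩, -, rfl⟩ := List.mem_map.1 hx
  cases e
  · right; simp [letter]
  · left; simp [letter]

lemma exists_word_of_list {V : Type*} (Γ : SimpleGraph V) (l : List (RAAG Γ))
    (hl : ∀ x ∈ l, x ∈ Set.range (gen Γ) ∨ x⁻¹ ∈ Set.range (gen Γ)) :
    ∃ w : List (V × Bool), w.length = l.length ∧ ev Γ w = l.prod := by
  induction l with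
  | nil => exact ⟨[], rfl, rfl⟩
  | cons x l ih =>
    obtain ⟨w, h1, h2⟩ := ih fun y hy => hl y (List.mem_cons_of_mem _ hy)
    have key : ∃ v e, letter Γ v e = x := by
      rcases hl x List.mem_cons_self with ⟨v, hv⟩ | ⟨v, hv⟩
      · exact ⟨v, true, by simp [letter, hv]⟩
      · exact ⟨v, false, by simp [letter, hv]⟩
    obtain ⟨v, e, rfl⟩ := key
    refine ⟨(v, e) :: w, by simp [h1], ?_⟩
    rw [List.prod_cons, ← h2]
    simp [ev]

lemma exists_word {V : Type*} (Γ : SimpleGraph V) (g : RAAG Γ) :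
    ∃ w : List (V × Bool), ev Γ w = g := by
  obtain ⟨f, rfl⟩ := PresentedGroup.mk_surjective (raagRels Γ) g
  induction f using FreeGroup.induction_on with
  | C1 => exact ⟨[], by simp [ev]⟩
  | of v => exact ⟨[(v, true)], by simp [ev, letter, gen]; rfl⟩
  | inv_of v _ => exact ⟨[(v, false)], by simp [ev, letter, gen]; rfl⟩
  | mul a b ha hb =>
    obtain ⟨w, h⟩ := ha
    obtain ⟨w', h'⟩ := hb
    exact ⟨w ++ w', by rw [ev_append, h, h', map_mul]⟩

lemma exists_geodesic {V : Type*} (Γ : SimpleGraph V) (g : RAAG Γ) :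
    ∃ w : List (V × Bool), ev Γ w = g ∧ w.length = wordLength Γ g := by
  have hne : {n | ∃ l : List (RAAG Γ), l.length = n ∧
      (∀ x ∈ l, x ∈ Set.range (gen Γ) ∨ x⁻¹ ∈ Set.range (gen Γ)) ∧ l.prod = g}.Nonempty := by
    obtain ⟨w, hw⟩ := exists_word Γ g
    refine ⟨w.length, w.map (fun p : V × Bool => letter Γ p.1 p.2), by simp, ?_, hw⟩
    intro x hx
    obtain ⟨⟨v, e⟩, -, rfl⟩ := List.mem_map.1 hx
    cases e
    · right; simp [letter]
    · left; simp [letter]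
  obtain ⟨l, h1, h2, h3⟩ := Nat.sInf_mem hne
  obtain ⟨w, h4, h5⟩ := exists_word_of_list Γ l h2
  exact ⟨w, h5.trans h3, h4.trans h1⟩

/-- The parity homomorphism. -/
def parity {V : Type*} (Γ : SimpleGraph V) : RAAG Γ →* Multiplicative (ZMod 2) :=
  PresentedGroup.toGroup (f := fun _ => Multiplicative.ofAdd 1) (by
    rintro r ⟨u, v, -, rfl⟩
    simp)

lemma parity_letter {V : Type*} (Γ : SimpleGraph V) (v : V) (e : Bool) :
    parity Γ (letter Γ v e) = Multiplicative.ofAdd 1 := by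
  have h : parity Γ (gen Γ v) = Multiplicative.ofAdd 1 := PresentedGroup.toGroup.of _
  cases e
  · simp only [letter, Bool.false_eq_true, if_false, map_inv, h]; decide
  · simp only [letter, if_true, h]

lemma parity_ev {V : Type*} (Γ : SimpleGraph V) (w : List (V × Bool)) :
    parity Γ (ev Γ w) = Multiplicative.ofAdd (w.length : ZMod 2) := by
  induction w with
  | nil => simp [ev]
  | cons p w ih =>
    have : ev Γ (p :: w) = letter Γ p.1 p.2 * ev Γ w := by simp [ev]
    rw [this, map_mul, ih, parity_letter, ← ofAdd_add, List.length_cons]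
    push_cast
    rw [add_comm]

lemma parity_eq {V : Type*} (Γ : SimpleGraph V) (g : RAAG Γ) :
    parity Γ g = Multiplicative.ofAdd (wordLength Γ g : ZMod 2) := by
  obtain ⟨w, rfl, h⟩ := exists_geodesic Γ g
  rw [parity_ev, h]

lemma wordLength_mul_letter_le {V : Type*} (Γ : SimpleGraph V) (g : RAAG Γ) (v : V) (e : Bool) :
    wordLength Γ (g * letter Γ v e) ≤ wordLength Γ g + 1 := by
  obtain ⟨w, rfl, h⟩ := exists_geodesic Γ g
  rw [← h, ← ev_single, ← ev_append]
  simpa using wordLength_le Γ (w ++ [(v, e)])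

lemma wordLength_mul_letter_ne {V : Type*} (Γ : SimpleGraph V) (g : RAAG Γ) (v : V) (e : Bool) :
    wordLength Γ (g * letter Γ v e) ≠ wordLength Γ g := by
  intro h
  have h1 := parity_eq Γ (g * letter Γ v e)
  rw [h, ← parity_eq, map_mul, parity_letter] at h1
  have h2 : (Multiplicative.ofAdd (1 : ZMod 2)) = 1 := by simpa using h1
  exact absurd h2 (by decide)

lemma wordLength_mul_letter {V : Type*} (Γ : SimpleGraph V) (g : RAAG Γ) (v : V) (e : Bool) :
    wordLength Γ (g * letter Γ v e) = wordLength Γ g + 1 ∨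
      wordLength Γ g = wordLength Γ (g * letter Γ v e) + 1 := by
  have h1 := wordLength_mul_letter_le Γ g v e
  have h2 := wordLength_mul_letter_ne Γ g v e
  have h3 := wordLength_mul_letter_le Γ (g * letter Γ v e) v (!e)
  rw [letter_not, mul_inv_cancel_right] at h3
  omega

end RAAG

theorem raag_abs_preserves_adjacency {V : Type*} [Fintype V] (Γ : SimpleGraph V)
    (abs : RAAG Γ → RAAG Γ)
    (habs : ∀ (g : RAAG Γ) (w : List (V × Bool)),
      (w.map fun p => RAAG.letter Γ p.1 p.2).prod = g →
      w.length = RAAG.wordLength Γ g →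
      abs g = (w.map fun p => RAAG.gen Γ p.1).prod) :
    (∀ (g : RAAG Γ) (v : V) (e : Bool),
      RAAG.wordLength Γ (g * RAAG.letter Γ v e) = RAAG.wordLength Γ g + 1 →
      abs (g * RAAG.letter Γ v e) = abs g * RAAG.gen Γ v) ∧
    (∀ g₁ g₂ : RAAG Γ,
      RAAG.wordLength Γ ((abs g₁)⁻¹ * abs g₂) ≤ RAAG.wordLength Γ (g₁⁻¹ * g₂)) := by
  have H1 : ∀ (g : RAAG Γ) (v : V) (e : Bool),
      RAAG.wordLength Γ (g * RAAG.letter Γ v e) = RAAG.wordLength Γ g + 1 →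
      abs (g * RAAG.letter Γ v e) = abs g * RAAG.gen Γ v := by
    intro g v e h
    obtain ⟨w, hw, hl⟩ := RAAG.exists_geodesic Γ g
    rw [habs g w hw hl, habs (g * RAAG.letter Γ v e) (w ++ [(v, e)]) ?_ ?_]
    · simp
    · rw [← hw]; simp [RAAG.ev]
    · rw [h, ← hl]; simp
  refine ⟨H1, ?_⟩
  have H2 : ∀ (g : RAAG Γ) (v : V) (e : Bool), ∃ e' : Bool,
      abs (g * RAAG.letter Γ v e) = abs g * RAAG.letter Γ v e' := by
    intro g v e
    rcases RAAG.wordLength_mul_letter Γ g v e with h | h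
    · exact ⟨true, by simpa [RAAG.letter] using H1 g v e h⟩
    · have h3 := H1 (g * RAAG.letter Γ v e) v (!e)
      rw [RAAG.letter_not, mul_inv_cancel_right] at h3
      refine ⟨false, ?_⟩
      rw [h3 h]
      simp [RAAG.letter]
  have H3 : ∀ (w : List (V × Bool)) (g : RAAG Γ), ∃ w' : List (V × Bool),
      w'.length = w.length ∧ abs (g * RAAG.ev Γ w) = abs g * RAAG.ev Γ w' := by
    intro w
    induction w with
    | nil => intro g; exact ⟨[], rfl, by simp [RAAG.ev]⟩
    | cons p w ih =>
      intro g
      obtain ⟨e', he⟩ := H2 g p.1 p.2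
      obtain ⟨w', hl, hw⟩ := ih (g * RAAG.letter Γ p.1 p.2)
      refine ⟨(p.1, e') :: w', by simp [hl], ?_⟩
      have a1 : RAAG.ev Γ (p :: w) = RAAG.letter Γ p.1 p.2 * RAAG.ev Γ w := by simp [RAAG.ev]
      have a2 : RAAG.ev Γ ((p.1, e') :: w') = RAAG.letter Γ p.1 e' * RAAG.ev Γ w' := by
        simp [RAAG.ev]
      rw [a1, a2, ← mul_assoc, hw, he, mul_assoc]
  intro g₁ g₂
  obtain ⟨w, hw, hl⟩ := RAAG.exists_geodesic Γ (g₁⁻¹ * g₂)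
  obtain ⟨w', hl', hw'⟩ := H3 w g₁
  rw [hw, mul_inv_cancel_left] at hw'
  rw [hw', inv_mul_cancel_left, ← hl, ← hl']
  exact RAAG.wordLength_le Γ w'
end

section
/- For every element g of the right-angled Artin group A_Γ, the absolute value satisfies h(abs(g)) = |g| = |abs(g)|. Moreover abs is idempotent: if h(g) = |g| then abs(g) = g; in particular abs(abs(g)) = abs(g) for every g. -/
theorem raagaux_T {V : Type*} (Γ : SimpleGraph V) (v : V) :
    RAAG.letter Γ v true = RAAG.gen Γ v := rfl

theorem raagaux_F {V : Type*} (Γ : SimpleGraph V) (v : V) :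
    RAAG.letter Γ v false = (RAAG.gen Γ v)⁻¹ := rfl

theorem raagaux_exists {V : Type*} (Γ : SimpleGraph V) (g : RAAG Γ) :
    ∃ w : List (V × Bool), (w.map fun p => RAAG.letter Γ p.1 p.2).prod = g := by
  induction g using PresentedGroup.induction_on with
  | _ z =>
    obtain ⟨L, rfl⟩ := Quot.exists_rep z
    induction L with
    | nil => exact ⟨[], rfl⟩
    | cons p L ih =>
      obtain ⟨w, hw⟩ := ih
      obtain ⟨v, e⟩ := p
      refine ⟨(v, e) :: w, ?_⟩
      rw [List.map_cons, List.prod_cons, hw]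
      change _ = PresentedGroup.mk (raagRels Γ) (FreeGroup.mk [(v, e)] * FreeGroup.mk L)
      rw [map_mul]
      change _ * PresentedGroup.mk (raagRels Γ) (FreeGroup.mk L) = _
      congr 1
      cases e <;> rfl

theorem raagaux_word {V : Type*} (Γ : SimpleGraph V) (l : List (RAAG Γ))
    (hl : ∀ x ∈ l, x ∈ Set.range (RAAG.gen Γ) ∨ x⁻¹ ∈ Set.range (RAAG.gen Γ)) :
    ∃ w : List (V × Bool), (w.map fun p => RAAG.letter Γ p.1 p.2) = l := by
  induction l with
  | nil => exact ⟨[], rfl⟩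
  | cons x l ih =>
    obtain ⟨w, hw⟩ := ih (fun y hy => hl y (List.mem_cons_of_mem _ hy))
    rcases hl x List.mem_cons_self with ⟨v, hv⟩ | ⟨v, hv⟩
    · exact ⟨(v, true) :: w, by simp [hw, raagaux_T, raagaux_F, hv]⟩
    · exact ⟨(v, false) :: w, by simp [hw, raagaux_T, raagaux_F, hv]⟩

theorem raagaux_letter {V : Type*} (Γ : SimpleGraph V) (w : List (V × Bool)) :
    ∀ x ∈ (w.map fun p => RAAG.letter Γ p.1 p.2),
      x ∈ Set.range (RAAG.gen Γ) ∨ x⁻¹ ∈ Set.range (RAAG.gen Γ) := by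
  intro x hx
  obtain ⟨⟨v, e⟩, -, rfl⟩ := List.mem_map.1 hx
  cases e <;> simp [RAAG.letter]

theorem raagaux_le {V : Type*} (Γ : SimpleGraph V) (w : List (V × Bool)) :
    RAAG.wordLength Γ (w.map fun p => RAAG.letter Γ p.1 p.2).prod ≤ w.length :=
  Nat.sInf_le ⟨_, List.length_map _, raagaux_letter Γ w, rfl⟩

theorem raagaux_geod {V : Type*} (Γ : SimpleGraph V) (g : RAAG Γ) :
    ∃ w : List (V × Bool), (w.map fun p => RAAG.letter Γ p.1 p.2).prod = g ∧
      w.length = RAAG.wordLength Γ g := by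
  obtain ⟨w, hw⟩ := raagaux_exists Γ g
  obtain ⟨l, h1, h2, h3⟩ := Nat.sInf_mem
    (s := {n | ∃ l : List (RAAG Γ), l.length = n ∧
      (∀ x ∈ l, x ∈ Set.range (RAAG.gen Γ) ∨ x⁻¹ ∈ Set.range (RAAG.gen Γ)) ∧ l.prod = g})
    ⟨_, _, rfl, raagaux_letter Γ w, hw⟩
  obtain ⟨w', rfl⟩ := raagaux_word Γ l h2
  exact ⟨w', h3, (List.length_map _).symm.trans h1⟩

theorem raagaux_height {V : Type*} (Γ : SimpleGraph V)
    (h : RAAG Γ →* Multiplicative ℤ)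
    (hh : ∀ v : V, h (RAAG.gen Γ v) = Multiplicative.ofAdd (1 : ℤ)) (w : List (V × Bool)) :
    Multiplicative.toAdd (h (w.map fun p => RAAG.gen Γ p.1).prod) = (w.length : ℤ) ∧
    Multiplicative.toAdd (h (w.map fun p => RAAG.letter Γ p.1 p.2).prod) ≤ (w.length : ℤ) ∧
    (Multiplicative.toAdd (h (w.map fun p => RAAG.letter Γ p.1 p.2).prod) = (w.length : ℤ) →
      (w.map fun p => RAAG.gen Γ p.1).prod = (w.map fun p => RAAG.letter Γ p.1 p.2).prod) := by
  induction w with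
  | nil => simp
  | cons p w ih =>
    obtain ⟨v, e⟩ := p
    obtain ⟨h1, h2, h3⟩ := ih
    simp only [List.map_cons, List.prod_cons, map_mul, toAdd_mul, List.length_cons, hh, h1,
      toAdd_ofAdd]
    push_cast
    cases e
    · simp only [raagaux_F, map_inv, hh, toAdd_inv, toAdd_ofAdd]
      exact ⟨by ring, by linarith, fun h => by exfalso; linarith⟩
    · simp only [raagaux_T, hh, toAdd_ofAdd]
      exact ⟨by ring, by linarith, fun h => by rw [h3 (by linarith)]⟩

theorem raag_abs_height_and_idempotent {V : Type*} [Fintype V] (Γ : SimpleGraph V)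
    (h : RAAG Γ →* Multiplicative ℤ)
    (hh : ∀ v : V, h (RAAG.gen Γ v) = Multiplicative.ofAdd (1 : ℤ))
    (abs : RAAG Γ → RAAG Γ)
    (habs : ∀ (g : RAAG Γ) (w : List (V × Bool)),
      (w.map fun p => RAAG.letter Γ p.1 p.2).prod = g →
      w.length = RAAG.wordLength Γ g →
      abs g = (w.map fun p => RAAG.gen Γ p.1).prod) :
    (∀ g : RAAG Γ,
      Multiplicative.toAdd (h (abs g)) = (RAAG.wordLength Γ g : ℤ) ∧
      RAAG.wordLength Γ (abs g) = RAAG.wordLength Γ g) ∧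
    (∀ g : RAAG Γ,
      Multiplicative.toAdd (h g) = (RAAG.wordLength Γ g : ℤ) → abs g = g) ∧
    (∀ g : RAAG Γ, abs (abs g) = abs g) := by
  have A : ∀ g : RAAG Γ,
      Multiplicative.toAdd (h (abs g)) = (RAAG.wordLength Γ g : ℤ) ∧
      RAAG.wordLength Γ (abs g) = RAAG.wordLength Γ g := by
    intro g
    obtain ⟨w, hw, hl⟩ := raagaux_geod Γ g
    have e := habs g w hw hl
    have h1 : Multiplicative.toAdd (h (abs g)) = (RAAG.wordLength Γ g : ℤ) := by
      rw [e, (raagaux_height Γ h hh w).1, hl]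
    refine ⟨h1, le_antisymm ?_ ?_⟩
    · have := raagaux_le Γ (w.map fun p => (p.1, true))
      rw [List.length_map, hl, List.map_map] at this
      rw [e]
      exact this
    · obtain ⟨w', hw', hl'⟩ := raagaux_geod Γ (abs g)
      have := (raagaux_height Γ h hh w').2.1
      rw [hw', h1, hl'] at this
      exact_mod_cast this
  have B : ∀ g : RAAG Γ,
      Multiplicative.toAdd (h g) = (RAAG.wordLength Γ g : ℤ) → abs g = g := by
    intro g hg
    obtain ⟨w, hw, hl⟩ := raagaux_geod Γ g
    rw [habs g w hw hl, (raagaux_height Γ h hh w).2.2 (by rw [hw, hg, hl]), hw]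
  exact ⟨A, B, fun g => B _ (by rw [(A g).1, (A g).2])⟩
end

section
/- For any two subsets S, T ⊆ V of the vertex set of Γ, the subgroups of the right-angled Artin group A_Γ generated by S and by T intersect in the subgroup generated by S ∩ T: ⟨S⟩ ∩ ⟨T⟩ = ⟨S ∩ T⟩. In particular, if S and T are disjoint then ⟨S⟩ ∩ ⟨T⟩ = {1}. -/
open Classical in
theorem raag_exists_retraction {V : Type*} (Γ : SimpleGraph V) (S : Set V) :
    ∃ f : RAAG Γ →* RAAG Γ, ∀ v, f (RAAG.gen Γ v) = if v ∈ S then RAAG.gen Γ v else 1 := by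
  have key : ∀ r ∈ raagRels Γ,
      FreeGroup.lift (fun v => if v ∈ S then RAAG.gen Γ v else 1) r = 1 := by
    rintro r ⟨u, v, huv, rfl⟩
    have h : RAAG.gen Γ u * RAAG.gen Γ v * (RAAG.gen Γ u)⁻¹ * (RAAG.gen Γ v)⁻¹ = 1 :=
      PresentedGroup.one_of_mem (rels := raagRels Γ) ⟨u, v, huv, rfl⟩
    simp only [map_mul, map_inv, FreeGroup.lift_apply_of]
    by_cases hu : u ∈ S <;> by_cases hv : v ∈ S <;> simp [hu, hv, h]
  exact ⟨PresentedGroup.toGroup key, fun v => PresentedGroup.toGroup.of key⟩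

theorem raag_special_subgroup_intersection {V : Type*} [Fintype V]
    (Γ : SimpleGraph V) (S T : Set V) :
    Subgroup.closure (RAAG.gen Γ '' S) ⊓ Subgroup.closure (RAAG.gen Γ '' T)
      = Subgroup.closure (RAAG.gen Γ '' (S ∩ T)) ∧
    (Disjoint S T →
      Subgroup.closure (RAAG.gen Γ '' S) ⊓ Subgroup.closure (RAAG.gen Γ '' T) = ⊥) := by
  have main : Subgroup.closure (RAAG.gen Γ '' S) ⊓ Subgroup.closure (RAAG.gen Γ '' T)
      = Subgroup.closure (RAAG.gen Γ '' (S ∩ T)) := by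
    apply le_antisymm
    · rintro g ⟨hS, hT⟩
      obtain ⟨f, hf⟩ := raag_exists_retraction Γ S
      have h1 : Subgroup.closure (RAAG.gen Γ '' S) ≤ f.eqLocus (MonoidHom.id _) := by
        rw [Subgroup.closure_le]
        rintro _ ⟨v, hv, rfl⟩
        show f (RAAG.gen Γ v) = RAAG.gen Γ v
        simp [hf, hv]
      have h2 : Subgroup.closure (RAAG.gen Γ '' T) ≤
          (Subgroup.closure (RAAG.gen Γ '' (S ∩ T))).comap f := by
        rw [Subgroup.closure_le]
        rintro _ ⟨v, hv, rfl⟩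
        show f (RAAG.gen Γ v) ∈ Subgroup.closure (RAAG.gen Γ '' (S ∩ T))
        rw [hf]
        split_ifs with hs
        · exact Subgroup.subset_closure ⟨v, ⟨hs, hv⟩, rfl⟩
        · exact one_mem _
      have h3 : f g = g := h1 hS
      have h4 : f g ∈ Subgroup.closure (RAAG.gen Γ '' (S ∩ T)) := h2 hT
      rwa [h3] at h4
    · exact le_inf (Subgroup.closure_mono (Set.image_mono Set.inter_subset_left))
        (Subgroup.closure_mono (Set.image_mono Set.inter_subset_right))
  refine ⟨main, fun hd => ?_⟩
  rw [main, hd.inter_eq, Set.image_empty, Subgroup.closure_empty]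
end

section
/- Let v_1, …, v_d be distinct, pairwise adjacent vertices of Γ (a clique). Then the map ℤ^d → A_Γ given by (n_1, …, n_d) ↦ v_1^{n_1} v_2^{n_2} ⋯ v_d^{n_d} is an injective group homomorphism (the v_i pairwise commute in A_Γ), and it is an isometric embedding of ℤ^d with the ℓ¹ metric: the word length of v_1^{n_1} ⋯ v_d^{n_d} in A_Γ equals |n_1| + |n_2| + ⋯ + |n_d|. Thus mutually commuting generators generate an undistorted copy of ℤ^d. -/
theorem aux_mul {G : Type*} [Group G] : ∀ (d : ℕ) (g : Fin d → G)
    (_ : ∀ i j, i ≠ j → Commute (g i) (g j)) (m n : Fin d → ℤ),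
    (List.ofFn fun i => g i ^ (m i + n i)).prod
      = (List.ofFn fun i => g i ^ m i).prod * (List.ofFn fun i => g i ^ n i).prod := by
  intro d
  induction d with
  | zero => intros; simp
  | succ d ih =>
    intro g hc m n
    have hi := ih (fun i => g i.succ)
      (fun i j h => hc _ _ (fun e => h (Fin.succ_injective _ e)))
      (fun i => m i.succ) (fun i => n i.succ)
    have hcomm : Commute (List.ofFn fun i : Fin d => g i.succ ^ m i.succ).prod (g 0 ^ n 0) := by
      apply Commute.list_prod_left
      intro x hx
      rw [List.mem_ofFn] at hx
      obtain ⟨i, rfl⟩ := hx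
      exact ((hc _ _ (Fin.succ_ne_zero i)).zpow_left _).zpow_right _
    rw [List.ofFn_succ, List.ofFn_succ, List.ofFn_succ, List.prod_cons, List.prod_cons,
      List.prod_cons, hi, zpow_add]
    have h2 := hcomm.eq
    simp only [mul_assoc]
    congr 1
    simp only [← mul_assoc]
    rw [h2]

theorem aux_upper {G : Type*} [Group G] (X : Set G) : ∀ (d : ℕ) (g : Fin d → G)
    (_ : ∀ i, g i ∈ X) (n : Fin d → ℤ),
    ∃ l : List G, l.length = ∑ i, (n i).natAbs ∧ (∀ x ∈ l, x ∈ X ∨ x⁻¹ ∈ X) ∧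
      l.prod = (List.ofFn fun i => g i ^ n i).prod := by
  intro d
  induction d with
  | zero => intros; exact ⟨[], by simp⟩
  | succ d ih =>
    intro g hg n
    obtain ⟨l, h1, h2, h3⟩ := ih (fun i => g i.succ) (fun i => hg _) (fun i => n i.succ)
    have key : ∃ l' : List G, l'.length = (n 0).natAbs ∧ (∀ x ∈ l', x ∈ X ∨ x⁻¹ ∈ X) ∧
        l'.prod = g 0 ^ n 0 := by
      rcases Int.natAbs_eq (n 0) with h | h
      · refine ⟨List.replicate (n 0).natAbs (g 0), by simp, ?_, ?_⟩
        · intro x hx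
          rw [List.eq_of_mem_replicate hx]
          exact Or.inl (hg 0)
        · rw [List.prod_replicate, ← zpow_natCast, ← h]
      · refine ⟨List.replicate (n 0).natAbs (g 0)⁻¹, by simp, ?_, ?_⟩
        · intro x hx
          rw [List.eq_of_mem_replicate hx, inv_inv]
          exact Or.inr (hg 0)
        · rw [List.prod_replicate, ← zpow_natCast, inv_zpow', ← h]
    obtain ⟨l', h1', h2', h3'⟩ := key
    refine ⟨l' ++ l, ?_, ?_, ?_⟩
    · rw [List.length_append, h1, h1', Fin.sum_univ_succ]
    · intro x hx
      rcases List.mem_append.1 hx with h | h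
      · exact h2' x h
      · exact h2 x h
    · rw [List.prod_append, h3, h3', List.ofFn_succ, List.prod_cons]

open Classical in
theorem aux_hom {V : Type*} (Γ : SimpleGraph V) (d : ℕ) (v : Fin d → V) :
    ∃ φ : RAAG Γ →* Multiplicative (Fin d → ℤ), ∀ w,
      φ (RAAG.gen Γ w) = Multiplicative.ofAdd (fun i => if v i = w then (1 : ℤ) else 0) := by
  refine ⟨PresentedGroup.toGroup (f := fun w =>
    Multiplicative.ofAdd (fun i => if v i = w then (1 : ℤ) else 0)) ?_, ?_⟩
  · rintro r ⟨a, b, _, rfl⟩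
    simp only [map_mul, map_inv, FreeGroup.lift_apply_of]
    rw [mul_right_comm, mul_inv_cancel_right, mul_inv_cancel]
  · intro w
    exact PresentedGroup.toGroup.of _

theorem raag_clique_gives_undistorted_Zd {V : Type*} [Fintype V] (Γ : SimpleGraph V)
    (d : ℕ) (v : Fin d → V) (hinj : Function.Injective v)
    (hadj : ∀ i j : Fin d, i ≠ j → Γ.Adj (v i) (v j)) :
    (∀ i j : Fin d, i ≠ j → Commute (RAAG.gen Γ (v i)) (RAAG.gen Γ (v j))) ∧
    (∀ m n : Fin d → ℤ,
      (List.ofFn fun i => RAAG.gen Γ (v i) ^ (m i + n i)).prod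
        = (List.ofFn fun i => RAAG.gen Γ (v i) ^ m i).prod
          * (List.ofFn fun i => RAAG.gen Γ (v i) ^ n i).prod) ∧
    Function.Injective
      (fun n : Fin d → ℤ => (List.ofFn fun i => RAAG.gen Γ (v i) ^ n i).prod) ∧
    (∀ n : Fin d → ℤ,
      RAAG.wordLength Γ (List.ofFn fun i => RAAG.gen Γ (v i) ^ n i).prod
        = ∑ i, (n i).natAbs) := by
  classical
  have hcom : ∀ i j : Fin d, i ≠ j → Commute (RAAG.gen Γ (v i)) (RAAG.gen Γ (v j)) := by
    intro i j hij
    have h : (PresentedGroup.mk (raagRels Γ)) (FreeGroup.of (v i) * FreeGroup.of (v j) *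
        (FreeGroup.of (v i))⁻¹ * (FreeGroup.of (v j))⁻¹) = 1 :=
      PresentedGroup.one_of_mem ⟨v i, v j, hadj i j hij, rfl⟩
    simp only [map_mul, map_inv] at h
    have h' := mul_inv_eq_one.1 h
    exact mul_inv_eq_iff_eq_mul.1 h'
  obtain ⟨φ, hφ⟩ := aux_hom Γ d v
  have hval : ∀ n : Fin d → ℤ,
      φ (List.ofFn fun i => RAAG.gen Γ (v i) ^ n i).prod = Multiplicative.ofAdd n := by
    intro n
    rw [map_list_prod, List.map_ofFn, List.prod_ofFn]
    apply Multiplicative.toAdd.injective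
    rw [toAdd_prod]
    funext k
    rw [Finset.sum_apply]
    simp [hφ, hinj.eq_iff]
  refine ⟨hcom, aux_mul d _ hcom, ?_, ?_⟩
  · intro m n h
    have := congrArg φ h
    simp only [hval] at this
    exact Multiplicative.ofAdd.injective this
  · intro n
    have hlow : ∀ l : List (RAAG Γ),
        (∀ x ∈ l, x ∈ Set.range (RAAG.gen Γ) ∨ x⁻¹ ∈ Set.range (RAAG.gen Γ)) →
        ∑ i, ((Multiplicative.toAdd (φ l.prod)) i).natAbs ≤ l.length := by
      intro l
      induction l with
      | nil => intro _; simp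
      | cons x l ih =>
        intro hl
        have ih' := ih (fun y hy => hl y (List.mem_cons_of_mem _ hy))
        have hbase : ∀ w, ∑ i, (if v i = w then (1 : ℤ) else 0).natAbs ≤ 1 := by
          intro w
          have : ∀ i, (if v i = w then (1 : ℤ) else 0).natAbs = if v i = w then 1 else 0 := by
            intro i; split_ifs <;> rfl
          simp only [this]
          rw [← Finset.card_filter, Finset.card_le_one]
          intro a ha b hb
          simp only [Finset.mem_filter, Finset.mem_univ, true_and] at ha hb
          exact hinj (ha.trans hb.symm)
        have hx : ∑ i, ((Multiplicative.toAdd (φ x)) i).natAbs ≤ 1 := by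
          rcases hl x List.mem_cons_self with ⟨w, hw⟩ | ⟨w, hw⟩
          · rw [← hw, hφ]; exact hbase w
          · rw [← inv_inv x, ← hw, map_inv, hφ, toAdd_inv]
            simp only [Pi.neg_apply, Int.natAbs_neg]
            exact hbase w
        rw [List.prod_cons, map_mul, toAdd_mul, List.length_cons]
        calc _ ≤ ∑ i, (((Multiplicative.toAdd (φ x)) i).natAbs +
              ((Multiplicative.toAdd (φ l.prod)) i).natAbs) :=
              Finset.sum_le_sum (fun i _ => Int.natAbs_add_le _ _)
          _ ≤ _ := by rw [Finset.sum_add_distrib]; omega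
    obtain ⟨l, h1, h2, h3⟩ := aux_upper (Set.range (RAAG.gen Γ)) d
      (fun i => RAAG.gen Γ (v i)) (fun i => ⟨_, rfl⟩) n
    unfold RAAG.wordLength wlen
    apply le_antisymm
    · exact Nat.sInf_le ⟨l, h1, h2, h3⟩
    · refine le_csInf ⟨_, ⟨l, h1, h2, h3⟩⟩ ?_
      rintro b ⟨l', rfl, hl', hp⟩
      have := hlow l' hl'
      rw [hp, hval] at this
      exact this
end

section
/- (Linear divergence for product RAAGs.) Suppose the vertex set of Γ is partitioned as V = A ⊔ B with A and B nonempty and with every vertex of A joined to every vertex of B by an edge of Γ, so that A_Γ = A_{Γ[A]} × A_{Γ[B]} is a nontrivial direct product. Then for every natural number r and any two elements g₁, g₂ ∈ A_Γ with |g₁| = |g₂| = r, there is a path in the Cayley graph of A_Γ from g₁ to g₂ of length at most 6r, all of whose vertices have word length at least r (i.e., the path avoids the open ball of radius r about the identity). -/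
namespace RAAGaux

open HNNExtension HNNExtension.NormalWord

variable {V : Type*} (Γ : SimpleGraph V)

/-- Product of a word in letters. -/
def wprod (l : List (V × Bool)) : RAAG Γ := (l.map (fun x => RAAG.letter Γ x.1 x.2)).prod

@[simp] lemma wprod_nil : wprod Γ [] = 1 := rfl
@[simp] lemma wprod_cons (x : V × Bool) (l) :
    wprod Γ (x :: l) = RAAG.letter Γ x.1 x.2 * wprod Γ l := by simp [wprod]
@[simp] lemma wprod_append (l m : List (V × Bool)) :
    wprod Γ (l ++ m) = wprod Γ l * wprod Γ m := by simp [wprod]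

lemma letter_not (v : V) (e : Bool) : RAAG.letter Γ v (!e) = (RAAG.letter Γ v e)⁻¹ := by
  cases e <;> simp [RAAG.letter]

lemma letter_mem (v : V) (e : Bool) : RAAG.letter Γ v e ∈ Set.range (RAAG.gen Γ) ∨
    (RAAG.letter Γ v e)⁻¹ ∈ Set.range (RAAG.gen Γ) := by
  cases e <;> simp [RAAG.letter]

lemma wprod_inv (l : List (V × Bool)) :
    (wprod Γ l)⁻¹ = wprod Γ ((l.map (fun x => (x.1, !x.2))).reverse) := by
  induction l with
  | nil => simp
  | cons x l ih => simp [letter_not, ← ih]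

lemma wl_le (l : List (V × Bool)) : RAAG.wordLength Γ (wprod Γ l) ≤ l.length := by
  apply Nat.sInf_le
  refine ⟨l.map (fun x => RAAG.letter Γ x.1 x.2), by simp, ?_, rfl⟩
  intro x hx
  obtain ⟨y, -, rfl⟩ := List.mem_map.1 hx
  exact letter_mem Γ _ _

lemma lift_word (l : List (RAAG Γ))
    (h : ∀ x ∈ l, x ∈ Set.range (RAAG.gen Γ) ∨ x⁻¹ ∈ Set.range (RAAG.gen Γ)) :
    ∃ m : List (V × Bool), m.length = l.length ∧ wprod Γ m = l.prod := by
  induction l with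
  | nil => exact ⟨[], rfl, rfl⟩
  | cons x l ih =>
    obtain ⟨m, hm, hp⟩ := ih (fun y hy => h y (by simp [hy]))
    rcases h x (by simp) with ⟨v, hv⟩ | ⟨v, hv⟩
    · exact ⟨(v, true) :: m, by simp [hm], by simp [hp, RAAG.letter, hv]⟩
    · exact ⟨(v, false) :: m, by simp [hm], by simp [hp, RAAG.letter, hv]⟩

lemma exists_word (g : RAAG Γ) :
    ∃ l : List (V × Bool), wprod Γ l = g ∧ l.length = RAAG.wordLength Γ g := by
  have hne : {n | ∃ l : List (RAAG Γ), l.length = n ∧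
      (∀ x ∈ l, x ∈ Set.range (RAAG.gen Γ) ∨ x⁻¹ ∈ Set.range (RAAG.gen Γ)) ∧
      l.prod = g}.Nonempty := by
    have : g ∈ Subgroup.closure (Set.range (RAAG.gen Γ)) := by
      have := PresentedGroup.closure_range_of (raagRels Γ)
      have h2 : Set.range (RAAG.gen Γ) =
        Set.range (PresentedGroup.of : V → PresentedGroup (raagRels Γ)) := rfl
      rw [h2, this]; trivial
    have hex : ∃ m : List (V × Bool), wprod Γ m = g := by
      induction this using Subgroup.closure_induction with
      | mem x hx =>
        obtain ⟨v, rfl⟩ := hx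
        exact ⟨[(v, true)], by simp [RAAG.letter]⟩
      | one => exact ⟨[], rfl⟩
      | mul x y _ _ hx hy =>
        obtain ⟨a, rfl⟩ := hx
        obtain ⟨b, rfl⟩ := hy
        exact ⟨a ++ b, by simp⟩
      | inv x _ hx =>
        obtain ⟨a, rfl⟩ := hx
        exact ⟨_, (wprod_inv Γ a).symm⟩
    obtain ⟨m, hm⟩ := hex
    refine ⟨_, m.map (fun x : V × Bool => RAAG.letter Γ x.1 x.2), rfl, ?_, hm⟩
    intro x hx
    obtain ⟨y, -, rfl⟩ := List.mem_map.1 hx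
    exact letter_mem Γ _ _
  obtain ⟨l, h1, h2, h3⟩ := Nat.sInf_mem hne
  obtain ⟨m, hm, hp⟩ := lift_word Γ l h2
  exact ⟨m, hp.trans h3, hm.trans h1⟩

lemma wl_mul (g h : RAAG Γ) :
    RAAG.wordLength Γ (g * h) ≤ RAAG.wordLength Γ g + RAAG.wordLength Γ h := by
  obtain ⟨l, rfl, hl⟩ := exists_word Γ g
  obtain ⟨m, rfl, hm⟩ := exists_word Γ h
  rw [← hl, ← hm, ← wprod_append, ← List.length_append]
  exact wl_le Γ _

lemma wl_inv_le (g : RAAG Γ) : RAAG.wordLength Γ g⁻¹ ≤ RAAG.wordLength Γ g := by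
  obtain ⟨l, rfl, hl⟩ := exists_word Γ g
  rw [← hl]
  clear hl
  rw [wprod_inv]
  exact (wl_le Γ _).trans (by simp)

lemma wl_inv (g : RAAG Γ) : RAAG.wordLength Γ g⁻¹ = RAAG.wordLength Γ g :=
  le_antisymm (wl_inv_le Γ g) (by simpa using wl_inv_le Γ g⁻¹)

/-- Homs out of the RAAG. -/
def homOf {H : Type*} [Group H] (f : V → H) (hf : ∀ u v, Γ.Adj u v → f u * f v = f v * f u) :
    RAAG Γ →* H :=
  PresentedGroup.toGroup (f := f) (rels := raagRels Γ) (by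
    rintro r ⟨u, v, h, rfl⟩
    simp [hf u v h])

@[simp] lemma homOf_gen {H : Type*} [Group H] (f : V → H) (hf) (v : V) :
    homOf Γ f hf (RAAG.gen Γ v) = f v := PresentedGroup.toGroup.of _

lemma gen_comm {u v : V} (h : Γ.Adj u v) :
    RAAG.gen Γ u * RAAG.gen Γ v = RAAG.gen Γ v * RAAG.gen Γ u := by
  have : PresentedGroup.mk (raagRels Γ) (FreeGroup.of u * FreeGroup.of v *
      (FreeGroup.of u)⁻¹ * (FreeGroup.of v)⁻¹) = 1 :=
    PresentedGroup.one_of_mem ⟨u, v, h, rfl⟩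
  simp only [map_mul, map_inv] at this
  have h2 : RAAG.gen Γ u * RAAG.gen Γ v * (RAAG.gen Γ u)⁻¹ * (RAAG.gen Γ v)⁻¹ = 1 := this
  rw [mul_inv_eq_one, mul_inv_eq_iff_eq_mul] at h2
  exact h2

/-- parity -/
def par : RAAG Γ →* Multiplicative (ZMod 2) :=
  homOf Γ (fun _ => Multiplicative.ofAdd 1) (fun _ _ _ => rfl)

lemma par_wprod (l : List (V × Bool)) :
    par Γ (wprod Γ l) = Multiplicative.ofAdd (l.length : ZMod 2) := by
  induction l with
  | nil => simp
  | cons x l ih =>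
    have : par Γ (RAAG.letter Γ x.1 x.2) = Multiplicative.ofAdd 1 := by
      rcases x with ⟨v, e⟩
      cases e
      · simp [RAAG.letter, par]; decide
      · simp [RAAG.letter, par]
    rw [wprod_cons, map_mul, ih, this, ← ofAdd_add, List.length_cons]
    push_cast
    rw [add_comm]

lemma par_eq (g : RAAG Γ) :
    par Γ g = Multiplicative.ofAdd (RAAG.wordLength Γ g : ZMod 2) := by
  obtain ⟨l, rfl, hl⟩ := exists_word Γ g
  rw [par_wprod, hl]

lemma wl_letter_le (v : V) (e : Bool) : RAAG.wordLength Γ (RAAG.letter Γ v e) ≤ 1 := by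
  simpa using wl_le Γ [(v, e)]

lemma wl_mul_letter_ne (g : RAAG Γ) (v : V) (e : Bool) :
    RAAG.wordLength Γ (g * RAAG.letter Γ v e) ≠ RAAG.wordLength Γ g := by
  intro h
  have h1 := par_eq Γ (g * RAAG.letter Γ v e)
  rw [h, ← par_eq, map_mul] at h1
  have h2 : par Γ (RAAG.letter Γ v e) = 1 := by simpa using h1
  have h3 := par_wprod Γ [(v, e)]
  simp [h2] at h3
  exact absurd h3 (by decide)

lemma wl_one : RAAG.wordLength Γ 1 = 0 := by simpa using wl_le Γ []

lemma wl_letter (v : V) (e : Bool) : RAAG.wordLength Γ (RAAG.letter Γ v e) = 1 := by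
  have h1 := wl_letter_le Γ v e
  have h2 := wl_mul_letter_ne Γ 1 v e
  rw [one_mul, wl_one] at h2
  omega

/-- Centralizer of a vertex generator. -/
abbrev cen (v : V) : Subgroup (RAAG Γ) := Subgroup.centralizer {RAAG.gen Γ v}

abbrev HN (v : V) := HNNExtension (RAAG Γ) (cen Γ v) (cen Γ v) (MulEquiv.refl _)

open Classical in
/-- The map to the HNN extension, sending `v` to the stable letter. -/
noncomputable def toHN (v : V) : RAAG Γ →* HN Γ v :=
  homOf Γ (fun u => if u = v then HNNExtension.t else HNNExtension.of (RAAG.gen Γ u)) (by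
    have key : ∀ w, Γ.Adj v w → (HNNExtension.t : HN Γ v) * HNNExtension.of (RAAG.gen Γ w) =
        HNNExtension.of (RAAG.gen Γ w) * HNNExtension.t := by
      intro w h
      have hm : RAAG.gen Γ w ∈ cen Γ v := by
        rw [Subgroup.mem_centralizer_singleton_iff]
        first | exact gen_comm Γ h | exact (gen_comm Γ h).symm
      exact HNNExtension.t_mul_of (φ := MulEquiv.refl (cen Γ v)) ⟨_, hm⟩
    intro u w h
    by_cases hu : u = v <;> by_cases hw : w = v
    · subst hu; subst hw; rfl
    · subst hu; simp only [if_true, hw, if_false]; exact key w h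
    · subst hw; simp only [if_true, hu, if_false]; exact (key u h.symm).symm
    · simp only [hu, hw, if_false]; rw [← map_mul, ← map_mul, gen_comm Γ h])

/-- sign of a letter -/
def sgn (e : Bool) : ℤˣ := if e then 1 else -1

lemma sgn_inj {e f : Bool} (h : sgn e = sgn f) : e = f := by
  revert h; cases e <;> cases f <;> decide

lemma toHN_letter_self (v : V) (e : Bool) :
    toHN Γ v (RAAG.letter Γ v e) = (HNNExtension.t : HN Γ v) ^ ((sgn e : ℤˣ) : ℤ) := by
  cases e <;> simp [RAAG.letter, toHN, sgn]

lemma toHN_letter_ne (v u : V) (h : u ≠ v) (e : Bool) :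
    toHN Γ v (RAAG.letter Γ u e) = HNNExtension.of (RAAG.letter Γ u e) := by
  cases e <;> simp [RAAG.letter, toHN, h]

lemma geo_tail {x : V × Bool} {l : List (V × Bool)}
    (h : RAAG.wordLength Γ (wprod Γ (x :: l)) = (x :: l).length) :
    RAAG.wordLength Γ (wprod Γ l) = l.length := by
  have h1 := wl_le Γ l
  have h2 := wl_mul Γ (RAAG.letter Γ x.1 x.2) (wprod Γ l)
  have h3 := wl_letter_le Γ x.1 x.2
  rw [wprod_cons, List.length_cons] at h
  omega

lemma cancel_not_geo (v : V) (e : Bool) (l0 l1 : List (V × Bool))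
    (hc : wprod Γ l0 ∈ cen Γ v)
    (h : RAAG.wordLength Γ (wprod Γ ((v, e) :: (l0 ++ (v, !e) :: l1))) =
      ((v, e) :: (l0 ++ (v, !e) :: l1)).length) : False := by
  have hcomm : RAAG.letter Γ v e * wprod Γ l0 = wprod Γ l0 * RAAG.letter Γ v e := by
    rw [Subgroup.mem_centralizer_singleton_iff] at hc
    have hc' : Commute (RAAG.gen Γ v) (wprod Γ l0) := by
      first | exact hc | exact hc.symm
    cases e
    · simpa [RAAG.letter] using hc'.inv_left.eq
    · simpa [RAAG.letter] using hc'.eq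
  have : wprod Γ ((v, e) :: (l0 ++ (v, !e) :: l1)) = wprod Γ (l0 ++ l1) := by
    simp only [wprod_cons, wprod_append, letter_not]
    rw [← mul_assoc, hcomm]
    group
  rw [this] at h
  have h2 := wl_le Γ (l0 ++ l1)
  simp at h h2
  omega

open Classical in
lemma red (v : V) (l : List (V × Bool)) (hl : RAAG.wordLength Γ (wprod Γ l) = l.length) :
    ∃ W : ReducedWord (RAAG Γ) (cen Γ v) (cen Γ v),
      W.prod (MulEquiv.refl (cen Γ v)) = toHN Γ v (wprod Γ l) ∧
      W.toList.map Prod.fst = (l.filter (fun x => x.1 = v)).map (fun x => sgn x.2) ∧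
      (∀ s ∈ W.toList.head?, ∃ l0 l1 e, sgn e = s.1 ∧ l = l0 ++ (v, e) :: l1 ∧
        wprod Γ l0 = W.head) := by
  induction l with
  | nil => exact ⟨ReducedWord.empty _ _ _, by simp [ReducedWord.prod], by simp, by simp⟩
  | cons x l ih =>
    obtain ⟨W, h1, h2, h3⟩ := ih (geo_tail Γ hl)
    obtain ⟨u, e⟩ := x
    by_cases hu : u = v
    · subst hu
      have hch : ((sgn e, W.head) :: W.toList).IsChain
          (fun a b => a.2 ∈ toSubgroup (cen Γ u) (cen Γ u) a.1 → a.1 = b.1) := by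
        rw [List.isChain_cons]
        refine ⟨?_, W.chain⟩
        intro s hs hmem
        obtain ⟨l0, l1, f, hf, hl2, hw⟩ := h3 s hs
        by_contra hne
        have hfe : f = !e := Bool.eq_not_of_ne (by
            rintro rfl; exact hne hf)
        subst hfe
        have hmem' : wprod Γ l0 ∈ cen Γ u := by
          rw [hw]
          simpa [toSubgroup] using hmem
        rw [hl2] at hl
        exact cancel_not_geo Γ u e l0 l1 hmem' hl
      refine ⟨⟨1, (sgn e, W.head) :: W.toList, hch⟩, ?_, ?_, ?_⟩
      · rw [wprod_cons, map_mul, ← h1, toHN_letter_self]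
        simp [ReducedWord.prod, mul_assoc]
      · simp [h2]
      · intro s hs
        simp at hs
        subst hs
        exact ⟨[], l, e, rfl, rfl, rfl⟩
    · refine ⟨⟨RAAG.letter Γ u e * W.head, W.toList, W.chain⟩, ?_, ?_, ?_⟩
      · rw [wprod_cons, map_mul, ← h1, toHN_letter_ne Γ v u hu]
        simp [ReducedWord.prod, mul_assoc]
      · simp [h2, hu]
      · intro s hs
        obtain ⟨l0, l1, f, hf, hl2, hw⟩ := h3 s hs
        exact ⟨(u, e) :: l0, l1, f, hf, by simp [hl2], by simp [hw]⟩

lemma exists_up (g : RAAG Γ) (v : V) :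
    ∃ e, RAAG.wordLength Γ (g * RAAG.letter Γ v e) = RAAG.wordLength Γ g + 1 := by
  by_contra! hcon
  have key : ∀ e, ∃ w, wprod Γ (w ++ [(v, e)]) = g ∧
      RAAG.wordLength Γ (wprod Γ (w ++ [(v, e)])) = (w ++ [(v, e)]).length := by
    intro e
    obtain ⟨w, hw, hl⟩ := exists_word Γ (g * RAAG.letter Γ v (!e))
    have hg : wprod Γ (w ++ [(v, e)]) = g := by
      rw [wprod_append, hw]; simp [letter_not]
    refine ⟨w, hg, ?_⟩
    have a1 := hcon (!e)
    have a2 := wl_mul_letter_ne Γ g v (!e)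
    have a3 := wl_mul Γ g (RAAG.letter Γ v (!e))
    have a4 := wl_letter_le Γ v (!e)
    have a5 := wl_le Γ (w ++ [(v, e)])
    rw [hg] at a5 ⊢
    simp only [List.length_append, List.length_singleton] at a5 ⊢
    omega
  obtain ⟨w, hw, hwl⟩ := key true
  obtain ⟨w', hw', hwl'⟩ := key false
  obtain ⟨W, p1, p2, -⟩ := red Γ v _ hwl
  obtain ⟨W', q1, q2, -⟩ := red Γ v _ hwl'
  have := (ReducedWord.map_fst_eq_and_of_prod_eq (MulEquiv.refl (cen Γ v))
    (w₁ := W) (w₂ := W') (by rw [p1, q1, hw, hw'])).1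
  rw [p2, q2] at this
  have h2 := congrArg List.getLast? this
  simp [List.filter_append, sgn] at h2

lemma up_step (g : RAAG Γ) (v : V) (e : Bool)
    (h : RAAG.wordLength Γ (g * RAAG.letter Γ v e) = RAAG.wordLength Γ g + 1) :
    RAAG.wordLength Γ (g * RAAG.letter Γ v e * RAAG.letter Γ v e) =
      RAAG.wordLength Γ (g * RAAG.letter Γ v e) + 1 := by
  obtain ⟨f, hf⟩ := exists_up Γ (g * RAAG.letter Γ v e) v
  by_cases hfe : f = e
  · subst hfe; exact hf
  · have : f = !e := by revert hfe; cases e <;> cases f <;> decide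
    subst this
    rw [letter_not, mul_inv_cancel_right] at hf
    omega

/-- Paths outside the ball. -/
inductive RP (r : ℕ) : ℕ → RAAG Γ → RAAG Γ → Prop
  | nil (x) (h : r ≤ RAAG.wordLength Γ x) : RP r 0 x x
  | cons (n x y z) (h : r ≤ RAAG.wordLength Γ x) (h1 : RAAG.wordLength Γ (x⁻¹ * y) = 1)
      (h2 : RP r n y z) : RP r (n + 1) x z

lemma RP.trans {r m n : ℕ} {x y z : RAAG Γ} (h1 : RP Γ r m x y) (h2 : RP Γ r n y z) :
    RP Γ r (m + n) x z := by
  induction h1 with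
  | nil x h => simpa using h2
  | cons k x y w h h1 _ ih =>
    rw [Nat.add_right_comm]
    exact .cons _ _ _ _ h h1 (ih h2)

lemma RP.left {r n : ℕ} {x y : RAAG Γ} (h : RP Γ r n x y) : r ≤ RAAG.wordLength Γ x := by
  cases h <;> assumption

lemma RP.symm {r n : ℕ} {x y : RAAG Γ} (h : RP Γ r n x y) : RP Γ r n y x := by
  induction h with
  | nil x h => exact .nil x h
  | cons k x y z h h1 h2 ih =>
    refine ih.trans (Γ := Γ) (.cons 0 _ x _ h2.left ?_ (.nil x h))
    rw [← wl_inv]; simpa using h1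

lemma RP.toPath {r n : ℕ} {x y : RAAG Γ} (h : RP Γ r n x y) :
    ∃ p : ℕ → RAAG Γ, p 0 = x ∧ p n = y ∧
        (∀ i < n, RAAG.wordLength Γ ((p i)⁻¹ * p (i + 1)) = 1) ∧
        (∀ i ≤ n, r ≤ RAAG.wordLength Γ (p i)) := by
  induction h with
  | nil x h => exact ⟨fun _ => x, rfl, rfl, by simp, fun _ _ => h⟩
  | cons k x y z h h1 h2 ih =>
    obtain ⟨p, a, b, c, d⟩ := ih
    refine ⟨fun i => Nat.casesOn i x p, rfl, b, ?_, ?_⟩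
    · rintro (_ | i) hi
      · simpa [a] using h1
      · exact c i (by omega)
    · rintro (_ | i) hi
      · exact h
      · exact d i (by omega)

lemma up_path (r n : ℕ) (g : RAAG Γ) (v : V) (e : Bool) (hr : r ≤ RAAG.wordLength Γ g)
    (h : RAAG.wordLength Γ (g * RAAG.letter Γ v e) = RAAG.wordLength Γ g + 1) :
    RP Γ r n g (g * RAAG.letter Γ v e ^ n) ∧
    RAAG.wordLength Γ (g * RAAG.letter Γ v e ^ n) = RAAG.wordLength Γ g + n := by
  induction n generalizing g with
  | zero => simpa using RP.nil g hr
  | succ n ih =>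
    obtain ⟨h1, h2⟩ := ih (g * RAAG.letter Γ v e) (by omega) (up_step Γ g v e h)
    rw [pow_succ', ← mul_assoc]
    exact ⟨.cons _ _ _ _ hr (by simpa using wl_letter Γ v e) h1, by omega⟩

open Classical in
/-- Projection to the subgroup on `S`. -/
noncomputable def proj (S : Set V) : RAAG Γ →* RAAG Γ :=
  homOf Γ (fun v => if v ∈ S then RAAG.gen Γ v else 1) (by
    intro u v h
    split_ifs <;> simp [gen_comm Γ h])

lemma proj_letter_mem (S : Set V) {v : V} (h : v ∈ S) (e : Bool) :
    proj Γ S (RAAG.letter Γ v e) = RAAG.letter Γ v e := by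
  cases e <;> simp [RAAG.letter, proj, h]

lemma proj_letter_notMem (S : Set V) {v : V} (h : v ∉ S) (e : Bool) :
    proj Γ S (RAAG.letter Γ v e) = 1 := by
  cases e <;> simp [RAAG.letter, proj, h]

lemma word_ind {P : RAAG Γ → Prop} (h1 : P 1)
    (hm : ∀ v e g, P g → P (RAAG.letter Γ v e * g)) (g : RAAG Γ) : P g := by
  obtain ⟨l, rfl, -⟩ := exists_word Γ g
  induction l with
  | nil => exact h1
  | cons x l ih => rw [wprod_cons]; exact hm _ _ _ ih

lemma proj_proj (S : Set V) (g : RAAG Γ) : proj Γ S (proj Γ S g) = proj Γ S g := by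
  induction g using word_ind with
  | h1 => simp
  | hm v e g ih =>
    by_cases h : v ∈ S
    · simp [proj_letter_mem Γ S h, ih]
    · simp [proj_letter_notMem Γ S h, ih]

lemma proj_proj_disj (S T : Set V) (hd : Disjoint S T) (g : RAAG Γ) :
    proj Γ S (proj Γ T g) = 1 := by
  induction g using word_ind with
  | h1 => simp
  | hm v e g ih =>
    by_cases h : v ∈ T
    · simp [proj_letter_mem Γ T h, ih, proj_letter_notMem Γ S (Set.disjoint_right.1 hd h)]
    · simp [proj_letter_notMem Γ T h, ih]

lemma letter_comm {u v : V} (h : Γ.Adj u v) (e f : Bool) :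
    Commute (RAAG.letter Γ u e) (RAAG.letter Γ v f) := by
  have : Commute (RAAG.gen Γ u) (RAAG.gen Γ v) := gen_comm Γ h
  cases e <;> cases f <;> simp [RAAG.letter, this]

lemma proj_comm (A B : Set V) (hjoin : ∀ a ∈ A, ∀ b ∈ B, Γ.Adj a b) (g h : RAAG Γ) :
    Commute (proj Γ A g) (proj Γ B h) := by
  induction g using word_ind with
  | h1 => simp
  | hm v e g ih =>
    rw [map_mul]
    refine Commute.mul_left ?_ ih
    by_cases hv : v ∈ A
    · rw [proj_letter_mem Γ A hv]
      clear ih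
      induction h using word_ind with
      | h1 => simp
      | hm w f h ih =>
        rw [map_mul]
        refine Commute.mul_right ?_ ih
        by_cases hw : w ∈ B
        · rw [proj_letter_mem Γ B hw]; exact letter_comm Γ (hjoin v hv w hw) _ _
        · simp [proj_letter_notMem Γ B hw]
    · simp [proj_letter_notMem Γ A hv]

lemma decomp (A B : Set V) (hd : Disjoint A B) (hc : A ∪ B = Set.univ)
    (hjoin : ∀ a ∈ A, ∀ b ∈ B, Γ.Adj a b) (g : RAAG Γ) :
    proj Γ A g * proj Γ B g = g := by
  induction g using word_ind with
  | h1 => simp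
  | hm v e g ih =>
    by_cases hv : v ∈ A
    · simp [proj_letter_mem Γ A hv, proj_letter_notMem Γ B (Set.disjoint_left.1 hd hv),
        mul_assoc, ih]
    · have hB : v ∈ B := by
        have : v ∈ A ∪ B := by simp [hc]
        exact this.resolve_left hv
      have := (proj_comm Γ A B hjoin g (RAAG.letter Γ v e)).eq
      rw [proj_letter_mem Γ B hB] at this
      rw [map_mul, map_mul, proj_letter_mem Γ B hB, proj_letter_notMem Γ A hv, one_mul,
        ← mul_assoc, this, mul_assoc, ih]

lemma wl_proj_add (A B : Set V) (hd : Disjoint A B) (g : RAAG Γ) :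
    RAAG.wordLength Γ (proj Γ A g) + RAAG.wordLength Γ (proj Γ B g) ≤
      RAAG.wordLength Γ g := by
  obtain ⟨l, rfl, hl⟩ := exists_word Γ g
  rw [← hl]
  clear hl
  induction l with
  | nil => simp [wl_one]
  | cons x l ih =>
    obtain ⟨v, e⟩ := x
    have hle := wl_letter_le Γ v e
    simp only [wprod_cons, map_mul, List.length_cons]
    by_cases hA : v ∈ A
    · rw [proj_letter_mem Γ A hA, proj_letter_notMem Γ B (Set.disjoint_left.1 hd hA), one_mul]
      have := wl_mul Γ (RAAG.letter Γ v e) (proj Γ A (wprod Γ l))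
      omega
    · rw [proj_letter_notMem Γ A hA, one_mul]
      by_cases hB : v ∈ B
      · rw [proj_letter_mem Γ B hB]
        have := wl_mul Γ (RAAG.letter Γ v e) (proj Γ B (wprod Γ l))
        omega
      · rw [proj_letter_notMem Γ B hB, one_mul]
        omega

lemma proj_path (S : Set V) (r : ℕ) (k x : RAAG Γ)
    (h : ∀ j, r ≤ RAAG.wordLength Γ (x * proj Γ S j)) :
    ∃ n ≤ RAAG.wordLength Γ k, RP Γ r n x (x * proj Γ S k) := by
  obtain ⟨l, rfl, hl⟩ := exists_word Γ k
  rw [← hl]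
  clear hl
  induction l generalizing x with
  | nil => exact ⟨0, by simp, by simpa using RP.nil x (by simpa using h 1)⟩
  | cons y l ih =>
    obtain ⟨v, e⟩ := y
    by_cases hv : v ∈ S
    · obtain ⟨n, hn, hp⟩ := ih (x * RAAG.letter Γ v e) (fun j => by
        have := h (RAAG.letter Γ v e * j)
        rwa [map_mul, proj_letter_mem Γ S hv, ← mul_assoc] at this)
      refine ⟨n + 1, by simpa using hn, ?_⟩
      rw [wprod_cons, map_mul, proj_letter_mem Γ S hv, ← mul_assoc]
      exact .cons _ _ _ _ (by simpa using h 1) (by simpa using wl_letter Γ v e) hp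
    · obtain ⟨n, hn, hp⟩ := ih x h
      refine ⟨n, by simp; omega, ?_⟩
      rwa [wprod_cons, map_mul, proj_letter_notMem Γ S hv, one_mul]

end RAAGaux

open RAAGaux in
theorem raag_product_linear_divergence {V : Type*} [Fintype V] (Γ : SimpleGraph V)
    (A B : Set V) (hA : A.Nonempty) (hB : B.Nonempty)
    (hdisj : Disjoint A B) (hcover : A ∪ B = Set.univ)
    (hjoin : ∀ a ∈ A, ∀ b ∈ B, Γ.Adj a b) :
    ∀ (r : ℕ) (g₁ g₂ : RAAG Γ),
      RAAG.wordLength Γ g₁ = r → RAAG.wordLength Γ g₂ = r →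
      ∃ (L : ℕ) (p : ℕ → RAAG Γ),
        L ≤ 6 * r ∧ p 0 = g₁ ∧ p L = g₂ ∧
        (∀ i < L, RAAG.wordLength Γ ((p i)⁻¹ * p (i + 1)) = 1) ∧
        (∀ i ≤ L, r ≤ RAAG.wordLength Γ (p i)) := by
  intro r g₁ g₂ h₁ h₂
  obtain ⟨a, ha⟩ := hA
  obtain ⟨b, hb⟩ := hB
  obtain ⟨e, he⟩ := exists_up Γ g₁ b
  obtain ⟨f, hf⟩ := exists_up Γ g₂ a
  set n := RAAG.wordLength Γ (proj Γ A g₁) with hn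
  set m := RAAG.wordLength Γ (proj Γ B g₂) with hm
  obtain ⟨p1, l1⟩ := up_path Γ r n g₁ b e h₁.ge he
  obtain ⟨p2, l2⟩ := up_path Γ r m g₂ a f h₂.ge hf
  have hAx : proj Γ A (g₁ * RAAG.letter Γ b e ^ n) = proj Γ A g₁ := by
    simp [proj_letter_notMem Γ A (Set.disjoint_right.1 hdisj hb)]
  have hBy : proj Γ B (g₂ * RAAG.letter Γ a f ^ m) = proj Γ B g₂ := by
    simp [proj_letter_notMem Γ B (Set.disjoint_left.1 hdisj ha)]
  set x := g₁ * RAAG.letter Γ b e ^ n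
  set y := g₂ * RAAG.letter Γ a f ^ m
  clear_value x y
  have dx := decomp Γ A B hdisj hcover hjoin x
  have dy := decomp Γ A B hdisj hcover hjoin y
  have sx := wl_proj_add Γ A B hdisj x
  have sy := wl_proj_add Γ A B hdisj y
  have s1 := wl_proj_add Γ A B hdisj g₁
  have s2 := wl_proj_add Γ A B hdisj g₂
  have tx := wl_mul Γ (proj Γ A x) (proj Γ B x)
  have ty := wl_mul Γ (proj Γ A y) (proj Γ B y)
  rw [dx, hAx] at tx
  rw [dy, hBy] at ty
  rw [hAx] at sx
  rw [hBy] at sy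
  -- first middle path
  obtain ⟨n1, hn1, q1⟩ := proj_path Γ A r ((proj Γ A x)⁻¹ * proj Γ A y) x (by
    intro j
    have := wl_proj_add Γ A B hdisj (x * proj Γ A j)
    rw [map_mul (proj Γ B), proj_proj_disj Γ B A hdisj.symm, mul_one] at this
    omega)
  have hz : x * proj Γ A ((proj Γ A x)⁻¹ * proj Γ A y) = proj Γ A y * proj Γ B x := by
    rw [map_mul (proj Γ A), map_inv (proj Γ A), proj_proj, proj_proj]
    nth_rw 1 [← dx]
    rw [(proj_comm Γ A B hjoin x x).eq, (proj_comm Γ A B hjoin y x).eq]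
    group
  rw [hz] at q1
  obtain ⟨n2, hn2, q2⟩ := proj_path Γ B r ((proj Γ B x)⁻¹ * proj Γ B y)
      (proj Γ A y * proj Γ B x) (by
    intro j
    have := wl_proj_add Γ A B hdisj (proj Γ A y * proj Γ B x * proj Γ B j)
    rw [map_mul (proj Γ A), map_mul (proj Γ A), proj_proj_disj Γ A B hdisj,
      proj_proj_disj Γ A B hdisj, mul_one, mul_one, proj_proj] at this
    omega)
  have hy : proj Γ A y * proj Γ B x * proj Γ B ((proj Γ B x)⁻¹ * proj Γ B y) = y := by
    rw [map_mul (proj Γ B), map_inv (proj Γ B), proj_proj, proj_proj]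
    rw [mul_assoc, mul_inv_cancel_left, dy]
  rw [hy] at q2
  obtain ⟨p, c1, c2, c3, c4⟩ := (((p1.trans Γ q1).trans Γ q2).trans Γ (p2.symm Γ)).toPath Γ
  refine ⟨_, p, ?_, c1, c2, c3, c4⟩
  have b1 := wl_mul Γ (proj Γ A x)⁻¹ (proj Γ A y)
  have b2 := wl_mul Γ (proj Γ B x)⁻¹ (proj Γ B y)
  rw [wl_inv, hAx] at b1
  rw [wl_inv, hBy] at b2
  rw [hAx] at hn1
  rw [hBy] at hn2
  omega
end

section
/- (Quadratic lower bound on divergence for non-product RAAGs.) Suppose Γ has at least two vertices and the complement graph Γᶜ (same vertex set, with u,v adjacent in Γᶜ iff u ≠ v and u,v are not adjacent in Γ) is connected, i.e., A_Γ is not a nontrivial direct product. Then for every ρ with 0 < ρ ≤ 1 there is a constant c > 0 such that for every natural number r there exist elements x, y ∈ A_Γ with |x| = |y| = r such that every path in the Cayley graph of A_Γ from x to y, all of whose vertices have word length at least ρ·r, has length at least c·r². -/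
namespace RD

variable {V : Type*} (Γ : SimpleGraph V)

/-- Parabolic subgroup. -/
abbrev PS (Λ : Set V) : Subgroup (RAAG Γ) := Subgroup.closure (RAAG.gen Γ '' Λ)

/-- Link subgroup. -/
abbrev LK (v : V) : Subgroup (RAAG Γ) := PS Γ {u | Γ.Adj v u}

/-- Hyperplanes. -/
abbrev Hyp : Type _ := Σ v : V, RAAG Γ ⧸ LK Γ v

/-- The hyperplane dual to the edge from `g` to `g * v`. -/
def hyp (v : V) (g : RAAG Γ) : Hyp Γ := ⟨v, (g : RAAG Γ ⧸ LK Γ v)⟩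

variable {Γ}

lemma smul_hyp (a g : RAAG Γ) (v : V) : a • hyp Γ v g = hyp Γ v (a * g) := rfl

lemma hyp_eq {v w : V} {g h : RAAG Γ} :
    hyp Γ v g = hyp Γ w h ↔ v = w ∧ g⁻¹ * h ∈ LK Γ v := by
  constructor
  · intro H
    unfold hyp at H
    rw [Sigma.mk.injEq] at H
    obtain ⟨rfl, H⟩ := H
    exact ⟨rfl, QuotientGroup.eq.1 (eq_of_heq H)⟩
  · rintro ⟨rfl, H⟩
    unfold hyp
    rw [QuotientGroup.eq.2 H]

lemma exists_hyp (K : Hyp Γ) : ∃ v g, K = hyp Γ v g := by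
  obtain ⟨v, q⟩ := K
  induction q using QuotientGroup.induction_on with
  | H g => exact ⟨v, g, rfl⟩

lemma gen_comm {u v : V} (h : Γ.Adj u v) :
    RAAG.gen Γ u * RAAG.gen Γ v = RAAG.gen Γ v * RAAG.gen Γ u := by
  have : (QuotientGroup.mk (FreeGroup.of u * FreeGroup.of v * (FreeGroup.of u)⁻¹ *
      (FreeGroup.of v)⁻¹) : RAAG Γ) = 1 := by
    apply PresentedGroup.one_of_mem
    exact ⟨u, v, h, rfl⟩
  have h2 : RAAG.gen Γ u * RAAG.gen Γ v * (RAAG.gen Γ u)⁻¹ * (RAAG.gen Γ v)⁻¹ = 1 := this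
  rw [mul_inv_eq_one, mul_inv_eq_iff_eq_mul] at h2
  exact h2

lemma closure_gen : Subgroup.closure (Set.range (RAAG.gen Γ)) = ⊤ :=
  PresentedGroup.closure_range_of _

lemma LK_comm {v : V} {a : RAAG Γ} (ha : a ∈ LK Γ v) :
    a * RAAG.gen Γ v = RAAG.gen Γ v * a := by
  have : LK Γ v ≤ Subgroup.centralizer {RAAG.gen Γ v} := by
    rw [Subgroup.closure_le]
    rintro _ ⟨u, hu, rfl⟩
    rw [SetLike.mem_coe, Subgroup.mem_centralizer_singleton_iff]
    exact (gen_comm hu).symm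
  exact Subgroup.mem_centralizer_singleton_iff.1 (this ha)

open Classical in
/-- delta function -/
noncomputable def dl (v : V) (K : Hyp Γ) : ℤ := if K = hyp Γ v 1 then 1 else 0

/-- affine generator -/
noncomputable def T (v : V) : Equiv.Perm (Hyp Γ → ℤ) where
  toFun f := fun K => f ((RAAG.gen Γ v)⁻¹ • K) + dl v K
  invFun f := fun K => f (RAAG.gen Γ v • K) - dl v (RAAG.gen Γ v • K)
  left_inv f := by
    funext K
    simp
  right_inv f := by
    funext K
    simp

lemma dl_smul {u v : V} (h : Γ.Adj u v) (K : Hyp Γ) :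
    dl v ((RAAG.gen Γ u)⁻¹ • K) = dl v K := by
  have : (RAAG.gen Γ u)⁻¹ • K = hyp Γ v 1 ↔ K = hyp Γ v 1 := by
    rw [inv_smul_eq_iff, smul_hyp, mul_one]
    have : hyp Γ v (RAAG.gen Γ u) = hyp Γ v 1 := by
      rw [hyp_eq]
      refine ⟨rfl, ?_⟩
      rw [mul_one]
      exact inv_mem (Subgroup.subset_closure ⟨u, h.symm, rfl⟩)
    rw [this]
  unfold dl
  by_cases h' : K = hyp Γ v 1
  · rw [if_pos h', if_pos (this.2 h')]
  · rw [if_neg h', if_neg (fun h2 => h' (this.1 h2))]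

lemma T_rel : ∀ r ∈ raagRels Γ, FreeGroup.lift (T (Γ := Γ)) r = 1 := by
  rintro _ ⟨u, v, h, rfl⟩
  simp only [map_mul, map_inv, FreeGroup.lift_apply_of]
  rw [mul_inv_eq_one, mul_inv_eq_iff_eq_mul]
  ext f K
  change f ((RAAG.gen Γ v)⁻¹ • (RAAG.gen Γ u)⁻¹ • K) + dl v ((RAAG.gen Γ u)⁻¹ • K) + dl u K =
    f ((RAAG.gen Γ u)⁻¹ • (RAAG.gen Γ v)⁻¹ • K) + dl u ((RAAG.gen Γ v)⁻¹ • K) + dl v K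
  rw [dl_smul h, dl_smul h.symm, smul_smul, smul_smul, ← mul_inv_rev, ← mul_inv_rev, gen_comm h]
  ring

/-- affine action -/
noncomputable def aff : RAAG Γ →* Equiv.Perm (Hyp Γ → ℤ) := PresentedGroup.toGroup T_rel

/-- signed crossing number cocycle -/
noncomputable def cc (g : RAAG Γ) (K : Hyp Γ) : ℤ := aff g 0 K

lemma aff_gen (v : V) : aff (RAAG.gen Γ v) = T v := PresentedGroup.toGroup.of T_rel

lemma cc_gen (v : V) (K : Hyp Γ) : cc (RAAG.gen Γ v) K = dl v K := by
  unfold cc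
  rw [aff_gen]
  simp [T]

lemma aff_apply (g : RAAG Γ) : ∀ (f : Hyp Γ → ℤ) (K : Hyp Γ),
    aff g f K = f (g⁻¹ • K) + cc g K := by
  have hg : g ∈ Subgroup.closure (Set.range (RAAG.gen Γ)) := by rw [closure_gen]; trivial
  induction hg using Subgroup.closure_induction with
  | mem x hx =>
    obtain ⟨v, rfl⟩ := hx
    intro f K
    rw [cc_gen, aff_gen]; rfl
  | one => intro f K; simp [cc]
  | mul x y _ _ hx hy =>
    intro f K
    have e1 : aff (x * y) f K = aff x (aff y f) K := by rw [map_mul]; rfl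
    have e2 : cc (x * y) K = aff x (aff y 0) K := by unfold cc; rw [map_mul]; rfl
    rw [e1, e2, hx, hx, hy, hy, mul_inv_rev, mul_smul]
    simp; ring
  | inv x _ hx =>
    have key : ∀ f K, aff x⁻¹ f K = f (x • K) - cc x (x • K) := by
      intro f K
      have := hx (aff x⁻¹ f) (x • K)
      rw [inv_smul_smul] at this
      have e : aff x (aff x⁻¹ f) = f := by rw [← Equiv.Perm.mul_apply, ← map_mul]; simp
      rw [e] at this
      linarith
    intro f K
    have h0 := key 0 K
    have h1 : cc x⁻¹ K = aff x⁻¹ 0 K := rfl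
    rw [h1, h0, key, inv_inv]
    simp; ring

lemma cc_mul (g h : RAAG Γ) (K : Hyp Γ) : cc (g * h) K = cc g K + cc h (g⁻¹ • K) := by
  have e2 : cc (g * h) K = aff g (aff h 0) K := by unfold cc; rw [map_mul]; rfl
  rw [e2, aff_apply, add_comm]; rfl

lemma cc_one (K : Hyp Γ) : cc (1 : RAAG Γ) K = 0 := by simp [cc]

lemma cc_inv (g : RAAG Γ) (K : Hyp Γ) : cc g⁻¹ K = - cc g (g • K) := by
  have := cc_mul g⁻¹ g K
  rw [inv_mul_cancel, cc_one, inv_inv] at this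
  linarith

open Classical in
lemma cc_mul_gen (g : RAAG Γ) (v : V) (K : Hyp Γ) :
    cc (g * RAAG.gen Γ v) K = cc g K + if K = hyp Γ v g then 1 else 0 := by
  rw [cc_mul, cc_gen, dl]
  congr 2
  rw [inv_smul_eq_iff, smul_hyp, mul_one]

open Classical in
lemma cc_mul_gen_inv (g : RAAG Γ) (v : V) (K : Hyp Γ) :
    cc (g * (RAAG.gen Γ v)⁻¹) K =
      cc g K - if K = hyp Γ v (g * (RAAG.gen Γ v)⁻¹) then 1 else 0 := by
  have := cc_mul_gen (g * (RAAG.gen Γ v)⁻¹) v K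
  rw [inv_mul_cancel_right] at this
  linarith

lemma cc_supp {Λ : Set V} {s : RAAG Γ} (hs : s ∈ PS Γ Λ) :
    ∀ K, cc s K ≠ 0 → ∃ x ∈ Λ, ∃ t ∈ PS Γ Λ, K = hyp Γ x t := by
  classical
  induction hs using Subgroup.closure_induction with
  | mem x hx =>
    obtain ⟨v, hv, rfl⟩ := hx
    intro K hK
    rw [cc_gen, dl] at hK
    refine ⟨v, hv, 1, one_mem _, ?_⟩
    by_contra h
    simp [h] at hK
  | one => intro K hK; exact absurd (cc_one K) hK
  | mul x y hx' _ hx hy =>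
    intro K hK
    rw [cc_mul] at hK
    by_cases h : cc x K = 0
    · obtain ⟨u, hu, t, ht, e⟩ := hy (x⁻¹ • K) (by intro h'; apply hK; rw [h, h']; rfl)
      refine ⟨u, hu, x * t, mul_mem hx' ht, ?_⟩
      rw [inv_smul_eq_iff, smul_hyp] at e
      exact e
    · exact hx K h
  | inv x hx' hx =>
    intro K hK
    rw [cc_inv] at hK
    obtain ⟨u, hu, t, ht, e⟩ := hx (x • K) (by intro h'; apply hK; rw [h']; rfl)
    refine ⟨u, hu, x⁻¹ * t, mul_mem (inv_mem hx') ht, ?_⟩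
    rw [smul_eq_iff_eq_inv_smul, smul_hyp] at e
    exact e

/-- relative support lemma -/
lemma cc_supp' {Λ : Set V} {a g : RAAG Γ} (hs : a⁻¹ * g ∈ PS Γ Λ) (K : Hyp Γ)
    (h : cc g K ≠ cc a K) : ∃ x ∈ Λ, ∃ t, a⁻¹ * t ∈ PS Γ Λ ∧ K = hyp Γ x t := by
  have e := cc_mul a (a⁻¹ * g) K
  rw [mul_inv_cancel_left] at e
  obtain ⟨x, hx, t, ht, e'⟩ := cc_supp hs (a⁻¹ • K) (by intro h'; apply h; rw [e, h']; simp)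
  rw [inv_smul_eq_iff, smul_hyp] at e'
  exact ⟨x, hx, a * t, by simpa using ht, e'⟩

/-! words -/

/-- letter predicate -/
def IsL (x : RAAG Γ) : Prop := x ∈ Set.range (RAAG.gen Γ) ∨ x⁻¹ ∈ Set.range (RAAG.gen Γ)

lemma IsL.cases {x : RAAG Γ} (h : IsL x) :
    ∃ v, x = RAAG.gen Γ v ∨ x = (RAAG.gen Γ v)⁻¹ := by
  rcases h with ⟨v, hv⟩ | ⟨v, hv⟩
  · exact ⟨v, Or.inl hv.symm⟩
  · exact ⟨v, Or.inr (by rw [hv, inv_inv])⟩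

lemma wl_le {l : List (RAAG Γ)} (hl : ∀ x ∈ l, IsL x) :
    RAAG.wordLength Γ l.prod ≤ l.length :=
  Nat.sInf_le ⟨l, rfl, hl, rfl⟩

lemma exists_word (g : RAAG Γ) : ∃ l : List (RAAG Γ),
    l.length = RAAG.wordLength Γ g ∧ (∀ x ∈ l, IsL x) ∧ l.prod = g := by
  have hg : g ∈ Subgroup.closure (Set.range (RAAG.gen Γ)) := by rw [closure_gen]; trivial
  rw [← Subgroup.mem_toSubmonoid, Subgroup.closure_toSubmonoid] at hg
  obtain ⟨l, hl, e⟩ := Submonoid.exists_list_of_mem_closure hg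
  exact Nat.sInf_mem (s := {n | ∃ l : List (RAAG Γ), l.length = n ∧
    (∀ x ∈ l, x ∈ Set.range (RAAG.gen Γ) ∨ x⁻¹ ∈ Set.range (RAAG.gen Γ)) ∧ l.prod = g})
    ⟨_, l, rfl, hl, e⟩

lemma wl_mul (g h : RAAG Γ) :
    RAAG.wordLength Γ (g * h) ≤ RAAG.wordLength Γ g + RAAG.wordLength Γ h := by
  obtain ⟨l, h1, h2, h3⟩ := exists_word g
  obtain ⟨m, k1, k2, k3⟩ := exists_word h
  rw [← h1, ← k1, ← h3, ← k3, ← List.prod_append, ← List.length_append]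
  apply wl_le
  intro x hx
  rcases List.mem_append.1 hx with hx | hx
  · exact h2 x hx
  · exact k2 x hx

lemma IsL.inv {x : RAAG Γ} (h : IsL x) : IsL x⁻¹ := by
  unfold IsL at *
  rw [inv_inv]
  exact h.symm

lemma wl_inv_le (g : RAAG Γ) : RAAG.wordLength Γ g⁻¹ ≤ RAAG.wordLength Γ g := by
  obtain ⟨l, h1, h2, h3⟩ := exists_word g
  rw [← h1, ← h3, List.prod_inv_reverse]
  refine (wl_le ?_).trans (by simp)
  intro x hx
  simp only [List.mem_reverse, List.mem_map] at hx
  obtain ⟨y, hy, rfl⟩ := hx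
  exact (h2 y hy).inv

lemma wl_inv (g : RAAG Γ) : RAAG.wordLength Γ g⁻¹ = RAAG.wordLength Γ g :=
  le_antisymm (wl_inv_le g) (by simpa using wl_inv_le g⁻¹)

lemma wl_one_letter {g : RAAG Γ} (h : RAAG.wordLength Γ g = 1) : IsL g := by
  obtain ⟨l, h1, h2, h3⟩ := exists_word g
  rw [h, List.length_eq_one_iff] at h1
  obtain ⟨a, rfl⟩ := h1
  simp at h3 h2
  rw [← h3]; exact h2

/-- one step changes at most one hyperplane -/
lemma step_sum {x : RAAG Γ} (hx : IsL x) (a : RAAG Γ) (F : Finset (Hyp Γ)) :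
    ∑ K ∈ F, |cc (a * x) K - cc a K| ≤ 1 := by
  classical
  obtain ⟨v, rfl | rfl⟩ := hx.cases
  · have : ∀ K, |cc (a * RAAG.gen Γ v) K - cc a K| = if K = hyp Γ v a then 1 else 0 := by
      intro K
      rw [cc_mul_gen]; split_ifs <;> simp
    simp only [this, Finset.sum_ite_eq']
    split_ifs <;> simp
  · have : ∀ K, |cc (a * (RAAG.gen Γ v)⁻¹) K - cc a K| =
        if K = hyp Γ v (a * (RAAG.gen Γ v)⁻¹) then 1 else 0 := by
      intro K
      rw [cc_mul_gen_inv]; split_ifs <;> simp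
    simp only [this, Finset.sum_ite_eq']
    split_ifs <;> simp

lemma step_hyp {x : RAAG Γ} (hx : IsL x) (a : RAAG Γ) (K : Hyp Γ) (h : cc a K ≠ cc (a * x) K) :
    ∃ v, K = hyp Γ v a ∨ K = hyp Γ v (a * x) := by
  classical
  obtain ⟨v, rfl | rfl⟩ := hx.cases
  · refine ⟨v, Or.inl ?_⟩
    by_contra h'
    rw [cc_mul_gen] at h
    simp [h'] at h
  · refine ⟨v, Or.inr ?_⟩
    by_contra h'
    rw [cc_mul_gen_inv] at h
    simp [h'] at h

lemma sum_le_len (F : Finset (Hyp Γ)) (l : List (RAAG Γ)) : (∀ x ∈ l, IsL x) → ∀ a : RAAG Γ,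
    ∑ K ∈ F, |cc (a * l.prod) K - cc a K| ≤ l.length := by
  induction l with
  | nil => intro _ a; simp
  | cons x l ih =>
    intro hl a
    have h1 := step_sum (hl x (by simp)) a F
    have h2 := ih (fun y hy => hl y (by simp [hy])) (a * x)
    rw [List.prod_cons, ← mul_assoc]
    calc _ ≤ ∑ K ∈ F, (|cc (a * x * l.prod) K - cc (a * x) K| + |cc (a * x) K - cc a K|) :=
          Finset.sum_le_sum (fun K _ => abs_sub_le _ _ _)
      _ ≤ _ := by rw [Finset.sum_add_distrib]; push_cast [List.length_cons]; linarith

lemma sum_le_dist (F : Finset (Hyp Γ)) (a b : RAAG Γ) :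
    ∑ K ∈ F, |cc b K - cc a K| ≤ RAAG.wordLength Γ (a⁻¹ * b) := by
  obtain ⟨l, h1, h2, h3⟩ := exists_word (a⁻¹ * b)
  have := sum_le_len F l h2 a
  rw [h3, mul_inv_cancel_left, h1] at this
  exact this

lemma exists_neg_cross (K : Hyp Γ) (l : List (RAAG Γ)) : (∀ x ∈ l, IsL x) → cc l.prod K < 0 →
    ∃ l1 l2 v, l = l1 ++ [(RAAG.gen Γ v)⁻¹] ++ l2 ∧
      K = hyp Γ v (l1.prod * (RAAG.gen Γ v)⁻¹) := by
  classical
  induction l using List.reverseRecOn with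
  | nil => intro _ h; simp [cc_one] at h
  | append_singleton l x ih =>
    intro hl h
    by_cases h0 : cc l.prod K < 0
    · obtain ⟨l1, l2, v, e, hK⟩ := ih (fun y hy => hl y (by simp [hy])) h0
      exact ⟨l1, l2 ++ [x], v, by rw [e]; simp, hK⟩
    · rw [List.prod_append, List.prod_singleton] at h
      obtain ⟨v, rfl | rfl⟩ := (hl x (by simp)).cases
      · rw [cc_mul_gen] at h
        split_ifs at h <;> omega
      · rw [cc_mul_gen_inv] at h
        split_ifs at h with hK
        · exact ⟨l, [], v, by simp, hK⟩
        · omega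

lemma exists_pos_cross (K : Hyp Γ) (l : List (RAAG Γ)) : (∀ x ∈ l, IsL x) → 0 < cc l.prod K →
    ∃ l1 l2 v, l = l1 ++ [RAAG.gen Γ v] ++ l2 ∧ K = hyp Γ v l1.prod := by
  classical
  induction l using List.reverseRecOn with
  | nil => intro _ h; simp [cc_one] at h
  | append_singleton l x ih =>
    intro hl h
    by_cases h0 : 0 < cc l.prod K
    · obtain ⟨l1, l2, v, e, hK⟩ := ih (fun y hy => hl y (by simp [hy])) h0
      exact ⟨l1, l2 ++ [x], v, by rw [e]; simp, hK⟩
    · rw [List.prod_append, List.prod_singleton] at h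
      obtain ⟨v, rfl | rfl⟩ := (hl x (by simp)).cases
      · rw [cc_mul_gen] at h
        split_ifs at h with hK
        · exact ⟨l, [], v, by simp, hK⟩
        · omega
      · rw [cc_mul_gen_inv] at h
        split_ifs at h <;> omega

lemma deletion {l l1 l2 : List (RAAG Γ)} {x y : RAAG Γ} (hl : ∀ x ∈ l, IsL x)
    (e : l = l1 ++ [y] ++ l2) (e2 : l.prod * x = l1.prod * l2.prod) :
    RAAG.wordLength Γ (l.prod * x) + 1 ≤ l.length := by
  rw [e2, ← List.prod_append]
  have : RAAG.wordLength Γ (l1 ++ l2).prod ≤ (l1 ++ l2).length := by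
    apply wl_le
    intro z hz
    apply hl
    rw [e]
    simp at hz ⊢
    tauto
  rw [e]
  simp at this ⊢
  omega

lemma low_aux (l : List (RAAG Γ)) : (∀ x ∈ l, IsL x) → l.length = RAAG.wordLength Γ l.prod →
    ∃ F : Finset (Hyp Γ), (l.length : ℤ) ≤ ∑ K ∈ F, |cc l.prod K| := by
  classical
  induction l using List.reverseRecOn with
  | nil => intro _ _; exact ⟨∅, by simp⟩
  | append_singleton l x ih =>
    intro hl hm
    have hl' : ∀ y ∈ l, IsL y := fun y hy => hl y (by simp [hy])
    have hx : IsL x := hl x (by simp)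
    rw [List.prod_append, List.prod_singleton, List.length_append, List.length_singleton] at hm
    have hx1 : RAAG.wordLength Γ x ≤ 1 := by
      have := wl_le (l := [x]) (by simpa using hx)
      simpa using this
    obtain ⟨F, hF⟩ := ih hl' (le_antisymm (by have := wl_mul l.prod x; omega) (wl_le hl'))
    rw [List.prod_append, List.prod_singleton, List.length_append, List.length_singleton]
    have key : ∃ K0, (∀ K, K ≠ K0 → cc (l.prod * x) K = cc l.prod K) ∧
        |cc (l.prod * x) K0| = |cc l.prod K0| + 1 := by
      obtain ⟨v, rfl | rfl⟩ := hx.cases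
      · refine ⟨hyp Γ v l.prod, fun K hK => by rw [cc_mul_gen]; simp [hK], ?_⟩
        rw [cc_mul_gen, if_pos rfl]
        by_cases h : cc l.prod (hyp Γ v l.prod) < 0
        · exfalso
          obtain ⟨l1, l2, w, e, hK⟩ := exists_neg_cross _ l hl' h
          obtain ⟨hvw, hK2⟩ := hyp_eq.1 hK
          subst hvw
          have hK' := inv_mem hK2
          have hp : l.prod = l1.prod * (RAAG.gen Γ v)⁻¹ * l2.prod := by
            conv_lhs => rw [e]
            simp [mul_assoc]
          have h2 : l2.prod ∈ LK Γ v := by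
            convert hK' using 1
            rw [hp]; group
          have := deletion (x := RAAG.gen Γ v) hl' e (by
            rw [hp, mul_assoc, LK_comm h2]; group)
          omega
        · rw [abs_of_nonneg (by omega), abs_of_nonneg (by omega)]
      · refine ⟨hyp Γ v (l.prod * (RAAG.gen Γ v)⁻¹),
          fun K hK => by rw [cc_mul_gen_inv]; simp [hK], ?_⟩
        rw [cc_mul_gen_inv, if_pos rfl]
        by_cases h : 0 < cc l.prod (hyp Γ v (l.prod * (RAAG.gen Γ v)⁻¹))
        · exfalso
          obtain ⟨l1, l2, w, e, hK⟩ := exists_pos_cross _ l hl' h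
          obtain ⟨hvw, hK2⟩ := hyp_eq.1 hK
          subst hvw
          have hK' := inv_mem hK2
          have hp : l.prod = l1.prod * RAAG.gen Γ v * l2.prod := by
            conv_lhs => rw [e]
            simp [mul_assoc]
          have h2 : RAAG.gen Γ v * l2.prod * (RAAG.gen Γ v)⁻¹ ∈ LK Γ v := by
            convert hK' using 1
            rw [hp]; group
          have h3 := LK_comm h2
          rw [inv_mul_cancel_right] at h3
          have h4 := mul_left_cancel h3
          have := deletion (x := (RAAG.gen Γ v)⁻¹) hl' e (by
            conv_rhs => rw [h4]
            rw [hp]; group)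
          omega
        · rw [abs_of_nonpos (by omega), abs_of_nonpos (by omega)]; ring
    obtain ⟨K0, hK, hK0⟩ := key
    refine ⟨insert K0 (F.erase K0), ?_⟩
    rw [Finset.sum_insert (by simp), hK0]
    have e1 : ∑ K ∈ F.erase K0, |cc (l.prod * x) K| = ∑ K ∈ F.erase K0, |cc l.prod K| :=
      Finset.sum_congr rfl (fun K hK' => by rw [hK K (Finset.ne_of_mem_erase hK')])
    have e2 : ∑ K ∈ F, |cc l.prod K| ≤ |cc l.prod K0| + ∑ K ∈ F.erase K0, |cc l.prod K| := by
      rw [← Finset.sum_insert (s := F.erase K0) (a := K0) (f := fun K => |cc l.prod K|) (by simp)]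
      apply Finset.sum_le_sum_of_subset_of_nonneg
      · intro K hK
        by_cases h : K = K0 <;> simp [h, hK]
      · intros; positivity
    rw [e1]
    push_cast
    linarith

lemma low (a g : RAAG Γ) : ∃ F : Finset (Hyp Γ),
    (RAAG.wordLength Γ (a⁻¹ * g) : ℤ) ≤ ∑ K ∈ F, |cc g K - cc a K| := by
  classical
  obtain ⟨l, h1, h2, h3⟩ := exists_word (a⁻¹ * g)
  obtain ⟨F, hF⟩ := low_aux l h2 (by rw [h1, h3])
  rw [h1, h3] at hF
  refine ⟨F.image (fun K => a • K), ?_⟩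
  rw [Finset.sum_image (fun x _ y _ h => MulAction.injective a h)]
  refine hF.trans (le_of_eq (Finset.sum_congr rfl fun K _ => ?_))
  have e := cc_mul a (a⁻¹ * g) (a • K)
  rw [mul_inv_cancel_left, inv_smul_smul] at e
  rw [e]; congr 1; ring

/-! the axis -/

/-- axis points -/
def W (v : ℕ → V) : ℕ → RAAG Γ
  | 0 => 1
  | n + 1 => W v n * RAAG.gen Γ (v n)

/-- axis hyperplanes -/
def H (v : ℕ → V) (k : ℕ) : Hyp Γ := hyp Γ (v k) (W v k)

lemma cc_W_mono (v : ℕ → V) (K : Hyp Γ) : Monotone (fun n => cc (W (Γ := Γ) v n) K) := by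
  classical
  apply monotone_nat_of_le_succ
  intro n
  simp only [W]
  rw [cc_mul_gen]
  split_ifs <;> omega

lemma cc_W_lt (v : ℕ → V) {j k l : ℕ} (h1 : j ≤ k) (h2 : k < l) :
    cc (W (Γ := Γ) v j) (H v k) < cc (W (Γ := Γ) v l) (H v k) := by
  have a1 := cc_W_mono (Γ := Γ) v (H v k) h1
  have a2 := cc_W_mono (Γ := Γ) v (H v k) (Nat.succ_le_of_lt h2)
  have a3 : cc (W (Γ := Γ) v (k + 1)) (H v k) = cc (W (Γ := Γ) v k) (H v k) + 1 := by
    simp only [W]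
    rw [cc_mul_gen, if_pos (show H v k = hyp Γ (v k) (W v k) from rfl)]
  simp only at a1 a2
  rw [Nat.succ_eq_add_one] at a2
  omega

/-- membership in the carrier -/
def Car (v : ℕ → V) (k : ℕ) (g : RAAG Γ) : Prop := (W v k)⁻¹ * g ∈ LK Γ (v k)

lemma Car_of_hyp {v : ℕ → V} {k : ℕ} {g : RAAG Γ} {x : V} (h : H v k = hyp Γ x g) :
    Car v k g := (hyp_eq.1 h).2

lemma disj {v : ℕ → V} (hv : ∀ i, ¬ Γ.Adj (v i) (v (i + 1))) (n : ℕ) :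
    ∀ i g, Car (Γ := Γ) v i g → ¬ Car (Γ := Γ) v (i + n + 1) g := by
  induction n with
  | zero =>
    intro i g h1 h2
    have e1 : cc g (H v i) = cc (W (Γ := Γ) v i) (H v i) := by
      by_contra h
      obtain ⟨x, hx, t, ht, e⟩ := cc_supp' h1 _ h
      obtain ⟨rfl, _⟩ := hyp_eq.1 e
      exact Γ.loopless.irrefl _ hx
    have e2 := cc_W_lt (Γ := Γ) v (le_refl i) (Nat.lt_succ_self i)
    obtain ⟨x, hx, t, ht, e⟩ := cc_supp' h2 (H v i) (by rw [e1]; exact ne_of_lt e2)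
    obtain ⟨rfl, _⟩ := hyp_eq.1 e
    exact hv i hx.symm
  | succ n ih =>
    intro i g h1 h2
    have hs : ∀ g, Car (Γ := Γ) v i g → ¬ Car (Γ := Γ) v (i + 1) g := by
      intro g h1 h2
      have e1 : cc g (H v i) = cc (W (Γ := Γ) v i) (H v i) := by
        by_contra h
        obtain ⟨x, hx, t, ht, e⟩ := cc_supp' h1 _ h
        obtain ⟨rfl, _⟩ := hyp_eq.1 e
        exact Γ.loopless.irrefl _ hx
      have e2 := cc_W_lt (Γ := Γ) v (le_refl i) (Nat.lt_succ_self i)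
      obtain ⟨x, hx, t, ht, e⟩ := cc_supp' h2 (H v i) (by rw [e1]; exact ne_of_lt e2)
      obtain ⟨rfl, _⟩ := hyp_eq.1 e
      exact hv i hx.symm
    have e1 : cc g (H v (i + 1)) = cc (W (Γ := Γ) v i) (H v (i + 1)) := by
      by_contra h
      obtain ⟨x, hx, t, ht, e⟩ := cc_supp' h1 _ h
      exact hs t ht (Car_of_hyp e)
    have e2 : cc g (H v (i + 1)) = cc (W (Γ := Γ) v (i + (n + 1) + 1)) (H v (i + 1)) := by
      by_contra h
      obtain ⟨x, hx, t, ht, e⟩ := cc_supp' h2 _ h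
      refine ih (i + 1) t (Car_of_hyp e) ?_
      have : i + 1 + n + 1 = i + (n + 1) + 1 := by ring
      rw [this]; exact ht
    have := cc_W_lt (Γ := Γ) v (show i ≤ i + 1 by omega) (show i + 1 < i + (n + 1) + 1 by omega)
    omega

lemma disj' {v : ℕ → V} (hv : ∀ i, ¬ Γ.Adj (v i) (v (i + 1))) {i k : ℕ} (h : i < k) {g : RAAG Γ}
    (h1 : Car v i g) (h2 : Car v k g) : False := by
  obtain ⟨n, rfl⟩ := Nat.exists_eq_add_of_lt h
  exact disj hv n i g h1 h2

/-- an axis hyperplane is not crossed from the carrier of another one -/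
lemma cc_car {v : ℕ → V} (hv : ∀ i, ¬ Γ.Adj (v i) (v (i + 1))) {i k : ℕ} (h : i ≠ k) {g : RAAG Γ}
    (h1 : Car v i g) : cc g (H v k) = cc (W (Γ := Γ) v i) (H v k) := by
  by_contra h'
  obtain ⟨x, hx, t, ht, e⟩ := cc_supp' h1 _ h'
  rcases lt_or_gt_of_ne h with h | h
  · exact disj' hv h ht (Car_of_hyp e)
  · exact disj' hv h (Car_of_hyp e) ht

lemma strong_sep {v : ℕ → V} (hv : ∀ i, ¬ Γ.Adj (v i) (v (i + 1))) {j M : ℕ}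
    (hM : ∀ x, ∃ k, 0 < k ∧ k < M ∧ v (j + k) = x) {a b : RAAG Γ} {K : Hyp Γ}
    (ha : Car v j a) (hb : Car v (j + M) b)
    (h1 : cc a K ≠ cc (W v j) K) (h2 : cc b K ≠ cc (W v (j + M)) K) : False := by
  obtain ⟨x, hx, s, hs, rfl⟩ := cc_supp' ha _ h1
  obtain ⟨y, hy, t, ht, e⟩ := cc_supp' hb _ h2
  obtain ⟨rfl, hst⟩ := hyp_eq.1 e
  obtain ⟨k, hk, hkM, hkx⟩ := hM x
  have e1 := cc_car hv (i := j) (k := j + k) (by omega) (g := s) hs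
  have e2 := cc_car hv (i := j + M) (k := j + k) (by omega) (g := t) ht
  have e3 := cc_W_lt (Γ := Γ) v (show j ≤ j + k by omega) (show j + k < j + M by omega)
  obtain ⟨z, hz, u, hu, e⟩ := cc_supp' hst (H v (j + k)) (by rw [e1, e2]; exact ne_of_gt e3)
  obtain ⟨rfl, _⟩ := hyp_eq.1 e
  rw [hkx] at hz
  exact Γ.loopless.irrefl _ hz

lemma wl_W_dist (v : ℕ → V) (j n : ℕ) :
    RAAG.wordLength Γ ((W v j)⁻¹ * W v (j + n)) ≤ n := by
  induction n with
  | zero =>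
    have := wl_le (Γ := Γ) (l := []) (by simp)
    simpa using this
  | succ n ih =>
    have h1 : RAAG.wordLength Γ (RAAG.gen Γ (v (j + n))) ≤ 1 := by
      have := wl_le (Γ := Γ) (l := [RAAG.gen Γ (v (j + n))]) (by
        intro x hx; rw [List.mem_singleton] at hx; exact Or.inl ⟨_, hx.symm⟩)
      simpa using this
    have e : (W (Γ := Γ) v j)⁻¹ * W v (j + (n + 1)) =
        (W (Γ := Γ) v j)⁻¹ * W v (j + n) * RAAG.gen Γ (v (j + n)) := by
      rw [mul_assoc]; rfl
    rw [e]
    exact (wl_mul _ _).trans (by omega)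

lemma sep_dist {v : ℕ → V} (hv : ∀ i, ¬ Γ.Adj (v i) (v (i + 1))) {j M : ℕ}
    (hM : ∀ x, ∃ k, 0 < k ∧ k < M ∧ v (j + k) = x) {a b : RAAG Γ}
    (ha : Car v j a) (hb : Car v (j + M) b) :
    RAAG.wordLength Γ ((W v j)⁻¹ * a) ≤ RAAG.wordLength Γ (a⁻¹ * b) + M := by
  obtain ⟨F, hF⟩ := low (W v j) a
  have h1 := sum_le_dist F a b
  have h2 := sum_le_dist F (W v j) (W v (j + M))
  have h3 := wl_W_dist (Γ := Γ) v j M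
  have key : ∀ K, |cc a K - cc (W v j) K| ≤
      |cc b K - cc a K| + |cc (W v (j + M)) K - cc (W v j) K| := by
    intro K
    by_cases h : cc a K = cc (W v j) K
    · rw [h]; simp; positivity
    · have : cc b K = cc (W v (j + M)) K := by
        by_contra h'
        exact strong_sep hv hM ha hb h h'
      rw [this]
      rw [abs_sub_comm (cc (W v (j+M)) K) (cc a K)]
      exact abs_sub_le _ _ _
  have h4 := Finset.sum_le_sum (s := F) (fun K _ => key K)
  rw [Finset.sum_add_distrib] at h4
  have : (RAAG.wordLength Γ ((W v j)⁻¹ * a) : ℤ) ≤ RAAG.wordLength Γ (a⁻¹ * b) + M := by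
    have : (RAAG.wordLength Γ ((W v j)⁻¹ * W v (j + M)) : ℤ) ≤ M := by exact_mod_cast h3
    linarith
  exact_mod_cast this

/-! exponent sum -/

/-- exponent sum -/
noncomputable def ex : RAAG Γ →* Multiplicative ℤ :=
  PresentedGroup.toGroup (f := fun _ => Multiplicative.ofAdd (1 : ℤ)) (by
    rintro _ ⟨u, v, _, rfl⟩
    simp)

lemma ex_gen (v : V) : ex (RAAG.gen Γ v) = Multiplicative.ofAdd (1 : ℤ) :=
  PresentedGroup.toGroup.of _

lemma ex_le_len (l : List (RAAG Γ)) : (∀ x ∈ l, IsL x) → |(ex l.prod).toAdd| ≤ l.length := by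
  induction l with
  | nil => intro _; simp
  | cons x l ih =>
    intro hl
    have h2 := ih (fun y hy => hl y (by simp [hy]))
    have h1 : |(ex x).toAdd| ≤ 1 := by
      obtain ⟨v, rfl | rfl⟩ := (hl x (by simp)).cases
      · rw [ex_gen]; simp
      · rw [map_inv, ex_gen]; simp
    rw [List.prod_cons, map_mul, toAdd_mul]
    have := abs_add_le (ex x).toAdd (ex l.prod).toAdd
    push_cast [List.length_cons]
    linarith

lemma ex_le (g : RAAG Γ) : |(ex g).toAdd| ≤ RAAG.wordLength Γ g := by
  obtain ⟨l, h1, h2, h3⟩ := exists_word g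
  rw [← h1, ← h3]
  exact ex_le_len l h2

lemma ex_W (v : ℕ → V) (n : ℕ) : (ex (W (Γ := Γ) v n)).toAdd = n := by
  induction n with
  | zero => simp [W]
  | succ n ih => simp only [W]; rw [map_mul, toAdd_mul, ih, ex_gen]; simp

lemma wl_W_eq (v : ℕ → V) (j n : ℕ) :
    RAAG.wordLength Γ ((W v j)⁻¹ * W v (j + n)) = n := by
  apply le_antisymm (wl_W_dist v j n)
  have := ex_le ((W (Γ := Γ) v j)⁻¹ * W v (j + n))
  rw [map_mul, map_inv, toAdd_mul, toAdd_inv, ex_W, ex_W] at this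
  push_cast at this
  rw [neg_add_cancel_left, abs_of_nonneg (by positivity)] at this
  exact_mod_cast this

/-! paths -/

lemma path_cross {q : ℕ → RAAG Γ} {L : ℕ} (hq : ∀ i < L, IsL ((q i)⁻¹ * q (i + 1)))
    (K : Hyp Γ) {i : ℕ} (hi : i ≤ L) (h : cc (q i) K ≠ cc (q L) K) :
    ∃ k, i ≤ k ∧ k ≤ L ∧ ∃ x, K = hyp Γ x (q k) := by
  by_contra hcon
  push Not at hcon
  apply h
  have : ∀ k, i ≤ k → k ≤ L → cc (q i) K = cc (q k) K := by
    intro k hik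
    induction k, hik using Nat.le_induction with
    | base => intro _; rfl
    | succ k hik ih =>
      intro hk
      rw [ih (by omega)]
      by_contra h'
      obtain ⟨x, hx⟩ := step_hyp (hq k (by omega)) (q k) K (by rwa [mul_inv_cancel_left])
      rw [mul_inv_cancel_left] at hx
      rcases hx with hx | hx
      · exact hcon k hik (by omega) x hx
      · exact hcon (k + 1) (by omega) hk x hx
  exact this L hi le_rfl

lemma path_len {q : ℕ → RAAG Γ} {L : ℕ} (hq : ∀ i < L, IsL ((q i)⁻¹ * q (i + 1)))
    (i n : ℕ) (h : i + n ≤ L) : RAAG.wordLength Γ ((q i)⁻¹ * q (i + n)) ≤ n := by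
  induction n with
  | zero =>
    have := wl_le (Γ := Γ) (l := []) (by simp)
    simpa using this
  | succ n ih =>
    have h1 : RAAG.wordLength Γ ((q (i + n))⁻¹ * q (i + n + 1)) ≤ 1 := by
      have := wl_le (Γ := Γ) (l := [(q (i + n))⁻¹ * q (i + n + 1)]) (by
        intro x hx; rw [List.mem_singleton] at hx; rw [hx]; exact hq _ (by omega))
      simpa using this
    have e : (q i)⁻¹ * q (i + (n + 1)) =
        (q i)⁻¹ * q (i + n) * ((q (i + n))⁻¹ * q (i + n + 1)) := by
      rw [← add_assoc]; group
    rw [e]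
    exact (wl_mul _ _).trans (by have := ih (by omega); omega)

lemma path_count {v : ℕ → V} (hv : ∀ i, ¬ Γ.Adj (v i) (v (i + 1))) {M : ℕ}
    (hM : ∀ j x, ∃ k, 0 < k ∧ k < M ∧ v (j + k) = x)
    {q : ℕ → RAAG Γ} {L r m : ℕ} (hr : 1 ≤ r) (hm : m ≤ r)
    (hq : ∀ i < L, IsL ((q i)⁻¹ * q (i + 1)))
    (h0 : q 0 = W v 0) (hL : q L = W v (r + r))
    (hfar : ∀ i ≤ L, 2 * m ≤ RAAG.wordLength Γ ((W v r)⁻¹ * q i)) (t : ℕ) :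
    t * M ≤ m → ∃ i ≤ L, Car v (r - m + t * M) (q i) ∧ t * m ≤ i + t * M := by
  induction t with
  | zero =>
    intro _
    obtain ⟨k, _, hk, x, hx⟩ := path_cross hq (H v (r - m)) (Nat.zero_le L) (by
      rw [h0, hL]
      exact ne_of_lt (cc_W_lt v (by omega) (by omega)))
    refine ⟨k, hk, ?_, by simp⟩
    rw [zero_mul, add_zero]
    exact Car_of_hyp hx
  | succ t ih =>
    intro ht
    rw [add_mul, one_mul] at ht
    obtain ⟨i, hi, hc, hti⟩ := ih (by omega)
    obtain ⟨k0, hk0, hk0M, _⟩ := hM 0 (v 0)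
    set j := r - m + t * M with hj
    have e1 := cc_car hv (i := j) (k := j + M) (by omega) hc
    obtain ⟨k, hik, hk, x, hx⟩ := path_cross hq (H v (j + M)) hi (by
      rw [e1, hL]
      exact ne_of_lt (cc_W_lt v (by omega) (by omega)))
    have hck : Car v (j + M) (q k) := Car_of_hyp hx
    refine ⟨k, hk, ?_, ?_⟩
    · have : r - m + (t + 1) * M = j + M := by rw [hj]; ring
      rw [this]; exact hck
    · have d1 := sep_dist hv (hM j) hc hck
      obtain ⟨n, rfl⟩ := Nat.exists_eq_add_of_le hik
      have d2 := path_len hq i n hk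
      have d3 := hfar i hi
      have d4 : RAAG.wordLength Γ ((W v r)⁻¹ * W v j) ≤ m := by
        rw [← wl_inv, mul_inv_rev, inv_inv]
        have := wl_W_dist (Γ := Γ) v j (r - j)
        have e : j + (r - j) = r := by omega
        rw [e] at this
        omega
      have d5 := wl_mul ((W v r)⁻¹ * W v j) ((W v j)⁻¹ * q i)
      rw [mul_assoc, mul_inv_cancel_left] at d5
      rw [add_mul, add_mul, one_mul, one_mul]
      omega

/-! closed walk -/

lemma exists_closed_walk {G : SimpleGraph V} [Fintype V] (hG : G.Connected) (a : V) :
    ∃ w : G.Walk a a, ∀ x, x ∈ w.support := by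
  classical
  have : ∀ S : Finset V, ∃ w : G.Walk a a, ∀ x ∈ S, x ∈ w.support := by
    intro S
    induction S using Finset.induction_on with
    | empty => exact ⟨SimpleGraph.Walk.nil, by simp⟩
    | insert u S _ ih =>
      obtain ⟨w, hw⟩ := ih
      obtain ⟨p⟩ := hG.preconnected a u
      refine ⟨w.append (p.append p.reverse), ?_⟩
      intro x hx
      rw [SimpleGraph.Walk.mem_support_append_iff, SimpleGraph.Walk.mem_support_append_iff]
      rcases Finset.mem_insert.1 hx with rfl | hx
      · right; left; exact p.end_mem_support
      · left; exact hw x hx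
  obtain ⟨w, hw⟩ := this Finset.univ
  exact ⟨w, fun x => hw x (Finset.mem_univ x)⟩

lemma exists_seq [Fintype V] (hV : 1 < Fintype.card V) (hcon : (Γᶜ).Connected) :
    ∃ (v : ℕ → V) (M : ℕ), (∀ i, ¬ Γ.Adj (v i) (v (i + 1))) ∧
      ∀ j x, ∃ k, 0 < k ∧ k < M ∧ v (j + k) = x := by
  obtain ⟨a, b, hab⟩ := Fintype.one_lt_card_iff.1 hV
  obtain ⟨w, hw⟩ := exists_closed_walk hcon a
  have hN : 0 < w.length := by
    rcases Nat.eq_zero_or_pos w.length with h | h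
    · exfalso
      have := hw b
      rw [SimpleGraph.Walk.length_eq_zero_iff, SimpleGraph.Walk.nil_iff_support_eq] at h
      rw [h] at this
      simp at this
      exact hab this.symm
    · exact h
  set N := w.length with hNdef
  refine ⟨fun i => w.getVert (i % N), N + 1, ?_, ?_⟩
  · intro i hadj
    have hlt := Nat.mod_lt i hN
    have h1 := w.adj_getVert_succ (i := i % N) hlt
    have h2 : w.getVert ((i + 1) % N) = w.getVert (i % N + 1) := by
      rw [Nat.add_mod_eq_ite]
      by_cases h1N : N = 1
      · have : i % N = 0 := by omega
        simp [h1N, Nat.mod_one]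
        have e : w.getVert 1 = a := by rw [← h1N]; exact w.getVert_length
        rw [e]
      · have : 1 % N = 1 := Nat.mod_eq_of_lt (by omega)
        rw [this]
        split_ifs with h
        · have e : i % N + 1 = N := by omega
          rw [e]; simp [hNdef]
        · rfl
    simp only at hadj
    rw [h2] at hadj
    exact ((SimpleGraph.compl_adj _ _ _).1 h1).2 hadj
  · intro j x
    obtain ⟨n, hn, hnN⟩ := SimpleGraph.Walk.mem_support_iff_exists_getVert.1 (hw x)
    have hx : ∃ n < N, w.getVert n = x := by
      rcases Nat.lt_or_ge n N with h | h
      · exact ⟨n, h, hn⟩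
      · refine ⟨0, hN, ?_⟩
        have : n = N := by omega
        rw [this, hNdef, SimpleGraph.Walk.getVert_length] at hn
        simpa using hn
    obtain ⟨n, hnlt, hn⟩ := hx
    -- need k in 1..N with (j+k) % N = n
    have hjN := Nat.mod_lt j hN
    by_cases h : j % N < n
    · refine ⟨n - j % N, by omega, by omega, ?_⟩
      have e : j + (n - j % N) = n + N * (j / N) := by
        have := Nat.mod_add_div j N
        omega
      simp only
      rw [e, Nat.add_mul_mod_self_left, Nat.mod_eq_of_lt hnlt, hn]
    · refine ⟨n + N - j % N, by omega, by omega, ?_⟩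
      have e : j + (n + N - j % N) = n + N * (j / N + 1) := by
        have := Nat.mod_add_div j N
        rw [mul_add]
        omega
      simp only
      rw [e, Nat.add_mul_mod_self_left, Nat.mod_eq_of_lt hnlt, hn]

end RD

theorem raag_nonproduct_quadratic_lower_divergence {V : Type*} [Fintype V]
    (Γ : SimpleGraph V) (hV : 1 < Fintype.card V) (hcon : (Γᶜ).Connected) :
    ∀ ρ : ℝ, 0 < ρ → ρ ≤ 1 →
      ∃ c : ℝ, 0 < c ∧
        ∀ r : ℕ, ∃ x y : RAAG Γ,
          RAAG.wordLength Γ x = r ∧ RAAG.wordLength Γ y = r ∧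
          ∀ (L : ℕ) (p : ℕ → RAAG Γ),
            p 0 = x → p L = y →
            (∀ i < L, RAAG.wordLength Γ ((p i)⁻¹ * p (i + 1)) = 1) →
            (∀ i ≤ L, ρ * (r : ℝ) ≤ (RAAG.wordLength Γ (p i) : ℝ)) →
            c * (r : ℝ) ^ 2 ≤ (L : ℝ) := by
  intro ρ hρ hρ1
  obtain ⟨v, M, hv, hM⟩ := RD.exists_seq hV hcon
  have hM1 : 1 ≤ M := by
    obtain ⟨k, _, _, _⟩ := hM 0 (v 0)
    omega
  have hM1' : (1 : ℝ) ≤ M := by exact_mod_cast hM1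
  have hMpos : (0 : ℝ) < M := by linarith
  refine ⟨ρ ^ 2 / (64 * M ^ 2), by positivity, ?_⟩
  intro r
  refine ⟨(RD.W v r)⁻¹, (RD.W v r)⁻¹ * RD.W v (r + r), ?_, RD.wl_W_eq v r r, ?_⟩
  · rw [RD.wl_inv]
    have := RD.wl_W_eq (Γ := Γ) v 0 r
    simpa [RD.W] using this
  intro L p hp0 hpL hstep hfar
  rcases Nat.eq_zero_or_pos r with hr | hr
  · subst hr; simp
  have hL1 : 1 ≤ L := by
    by_contra h
    have h0 : L = 0 := by omega
    rw [h0, hp0] at hpL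
    have := congrArg (fun g => (RD.ex g).toAdd) hpL
    simp only [map_mul, map_inv, toAdd_mul, toAdd_inv, RD.ex_W] at this
    push_cast at this
    omega
  have hL1' : (1 : ℝ) ≤ L := by exact_mod_cast hL1
  set z : ℝ := ρ * r / 2 with hz
  have hr' : (0 : ℝ) < r := by exact_mod_cast hr
  have hzpos : 0 < z := by positivity
  have hc : ρ ^ 2 / (64 * (M : ℝ) ^ 2) * (r : ℝ) ^ 2 = z ^ 2 / (16 * M ^ 2) := by
    rw [hz]; field_simp; ring
  rw [hc, div_le_iff₀ (by positivity)]
  by_cases hbig : z < 4 * M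
  · have : z ^ 2 ≤ (4 * M) ^ 2 := pow_le_pow_left₀ hzpos.le hbig.le 2
    nlinarith [sq_nonneg (M : ℝ)]
  push Not at hbig
  set m := ⌊z⌋₊ with hm
  have hmz : (m : ℝ) ≤ z := Nat.floor_le hzpos.le
  have hmz' : z < m + 1 := Nat.lt_floor_add_one z
  have hmr : m ≤ r := by
    have : (m : ℝ) ≤ r := by
      refine hmz.trans ?_
      rw [hz]; nlinarith
    exact_mod_cast this
  have hnM : m / M * M ≤ m := Nat.div_mul_le_self m M
  obtain ⟨i, hi, _, hcount⟩ := RD.path_count hv hM (q := fun i => RD.W v r * p i) (L := L)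
    (r := r) (m := m) hr hmr
    (by
      intro i hi
      have := RD.wl_one_letter (hstep i hi)
      have e : (RD.W v r * p i)⁻¹ * (RD.W v r * p (i + 1)) = (p i)⁻¹ * p (i + 1) := by group
      change RD.IsL ((RD.W v r * p i)⁻¹ * (RD.W v r * p (i + 1)))
      rw [e]; exact this)
    (by simp [hp0, RD.W]) (by simp [hpL])
    (by
      intro i hi
      rw [inv_mul_cancel_left]
      have := hfar i hi
      have : ((2 * m : ℕ) : ℝ) ≤ (RAAG.wordLength Γ (p i) : ℝ) := by
        push_cast
        refine le_trans ?_ this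
        have : ρ * r = 2 * z := by rw [hz]; ring
        linarith
      exact_mod_cast this) (m / M) hnM
  set n := m / M with hn
  have hn1 : m < (n + 1) * M := by
    rw [hn, mul_comm]; exact Nat.lt_mul_div_succ m hM1
  have hn1' : (m : ℝ) + 1 ≤ (n + 1) * M := by exact_mod_cast hn1
  have hc2 : (n : ℝ) * m ≤ L + n * M := by
    have : n * m ≤ L + n * M := by omega
    exact_mod_cast this
  have h1 : z / 2 ≤ (m : ℝ) - M := by linarith
  have h2 : z / 2 ≤ n * M := by linarith
  have h3 : (z / 2) * (z / 2) ≤ (n * M) * ((m : ℝ) - M) :=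
    mul_le_mul h2 h1 (by positivity) (by positivity)
  have h4 : (n * M) * ((m : ℝ) - M) ≤ L * M := by nlinarith
  have h5 : (L : ℝ) * M ≤ L * M ^ 2 := by
    apply mul_le_mul_of_nonneg_left _ (by positivity)
    nlinarith
  nlinarith
end

section
/- (Quadratic upper bound on divergence for RAAGs.) Suppose Γ is connected and has at least two vertices. Then there is a constant C ≥ 1 such that for every natural number r and any two elements x, y ∈ A_Γ with |x| = |y| = r, there is a path in the Cayley graph of A_Γ from x to y of length at most C·r² + C, all of whose vertices have word length at least r/C. -/
namespace RAAGDiv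

open RAAG

variable {V : Type*} (Γ : SimpleGraph V)

theorem exists_word (g : RAAG Γ) : ∃ l : List (RAAG Γ), l.length = wordLength Γ g ∧
    (∀ x ∈ l, x ∈ Set.range (gen Γ) ∨ x⁻¹ ∈ Set.range (gen Γ)) ∧ l.prod = g := by
  have hne : {n | ∃ l : List (RAAG Γ), l.length = n ∧
      (∀ x ∈ l, x ∈ Set.range (gen Γ) ∨ x⁻¹ ∈ Set.range (gen Γ)) ∧ l.prod = g}.Nonempty := by
    have hg : g ∈ Subgroup.closure (Set.range (gen Γ)) := by
      have : Subgroup.closure (Set.range (gen Γ)) = ⊤ :=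
        PresentedGroup.closure_range_of (raagRels Γ)
      rw [this]; trivial
    rw [← Subgroup.mem_toSubmonoid, Subgroup.closure_toSubmonoid] at hg
    obtain ⟨l, hl, hp⟩ := Submonoid.exists_list_of_mem_closure hg
    exact ⟨l.length, l, rfl, fun x hx => by simpa using hl x hx, hp⟩
  exact Nat.sInf_mem hne

theorem wl_le (l : List (RAAG Γ))
    (hl : ∀ x ∈ l, x ∈ Set.range (gen Γ) ∨ x⁻¹ ∈ Set.range (gen Γ)) :
    wordLength Γ l.prod ≤ l.length :=
  Nat.sInf_le ⟨l, rfl, hl, rfl⟩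

theorem wl_one : wordLength Γ 1 = 0 := by
  have := wl_le Γ [] (by simp)
  simpa using this

theorem wl_mul (g h : RAAG Γ) : wordLength Γ (g * h) ≤ wordLength Γ g + wordLength Γ h := by
  obtain ⟨l, h1, h2, h3⟩ := exists_word Γ g
  obtain ⟨k, k1, k2, k3⟩ := exists_word Γ h
  have := wl_le Γ (l ++ k) (by
    intro x hx
    rcases List.mem_append.1 hx with hx | hx
    · exact h2 x hx
    · exact k2 x hx)
  simpa [h1, k1, h3, k3] using this

theorem wl_inv_le (g : RAAG Γ) : wordLength Γ g⁻¹ ≤ wordLength Γ g := by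
  obtain ⟨l, h1, h2, h3⟩ := exists_word Γ g
  have := wl_le Γ (l.map (·⁻¹)).reverse (by
    intro x hx
    simp only [List.mem_reverse, List.mem_map] at hx
    obtain ⟨a, ha, rfl⟩ := hx
    rw [inv_inv]
    exact (h2 a ha).symm)
  rw [← List.prod_inv_reverse, h3] at this
  simpa [h1] using this

theorem wl_inv (g : RAAG Γ) : wordLength Γ g⁻¹ = wordLength Γ g :=
  le_antisymm (wl_inv_le Γ g) (by simpa using wl_inv_le Γ g⁻¹)

open Classical in
/-- exponent sum of `v` -/
noncomputable def expo (v : V) : RAAG Γ →* Multiplicative ℤ :=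
  PresentedGroup.toGroup (f := fun u => Multiplicative.ofAdd (if u = v then (1 : ℤ) else 0)) (by
    rintro r ⟨a, b, -, rfl⟩
    simp [mul_comm])

noncomputable def ex (v : V) (g : RAAG Γ) : ℤ := Multiplicative.toAdd (expo Γ v g)

theorem ex_mul (v : V) (g h : RAAG Γ) : ex Γ v (g * h) = ex Γ v g + ex Γ v h := by
  simp [ex]

theorem ex_inv (v : V) (g : RAAG Γ) : ex Γ v g⁻¹ = - ex Γ v g := by
  simp [ex]

theorem ex_zpow (v : V) (g : RAAG Γ) (k : ℤ) : ex Γ v (g ^ k) = k * ex Γ v g := by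
  simp [ex]

theorem ex_gen_self (v : V) : ex Γ v (gen Γ v) = 1 := by
  simp [ex, expo, gen]

theorem ex_gen_ne (v u : V) (h : u ≠ v) : ex Γ v (gen Γ u) = 0 := by
  simp [ex, expo, gen, h]

theorem ex_gen_abs (v u : V) : |ex Γ v (gen Γ u)| ≤ 1 := by
  by_cases h : u = v
  · subst h; simp [ex_gen_self]
  · simp [ex_gen_ne Γ v u h]

theorem ex_le (v : V) (g : RAAG Γ) : |ex Γ v g| ≤ wordLength Γ g := by
  obtain ⟨l, h1, h2, h3⟩ := exists_word Γ g
  rw [← h1, ← h3]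
  clear h1 h3
  induction l with
  | nil => simp [ex]
  | cons a l ih =>
    have ih := ih (fun x hx => h2 x (List.mem_cons_of_mem _ hx))
    have ha : |ex Γ v a| ≤ 1 := by
      rcases h2 a (by simp) with ⟨u, hu⟩ | ⟨u, hu⟩
      · rw [← hu]; exact ex_gen_abs Γ v u
      · have : a = (gen Γ u)⁻¹ := by rw [hu, inv_inv]
        rw [this, ex_inv, abs_neg]; exact ex_gen_abs Γ v u
    rw [List.prod_cons, ex_mul, List.length_cons]
    have := abs_add_le (ex Γ v a) (ex Γ v l.prod)
    push_cast
    linarith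

theorem wl_gen (v : V) : wordLength Γ (gen Γ v) = 1 := by
  have h1 := wl_le Γ [gen Γ v] (by simp)
  have h2 := ex_le Γ v (gen Γ v)
  rw [ex_gen_self] at h2
  simp at h1 h2
  omega

/-- graph of unit steps outside the ball of radius `m` -/
def H (m : ℕ) : SimpleGraph (RAAG Γ) where
  Adj g h := wordLength Γ (g⁻¹ * h) = 1 ∧ m ≤ wordLength Γ g ∧ m ≤ wordLength Γ h
  symm := ⟨by
    rintro g h ⟨h1, h2, h3⟩
    refine ⟨?_, h3, h2⟩
    rw [← wl_inv]
    simpa using h1⟩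
  loopless := ⟨by
    rintro g ⟨h1, -⟩
    simp [wl_one] at h1⟩

def R (m n : ℕ) (g h : RAAG Γ) : Prop := ∃ w : (H Γ m).Walk g h, w.length ≤ n

variable {Γ} {m : ℕ}

theorem R.trans {a b : ℕ} {g h k : RAAG Γ} (h1 : R Γ m a g h) (h2 : R Γ m b h k) :
    R Γ m (a + b) g k := by
  obtain ⟨w, hw⟩ := h1
  obtain ⟨w', hw'⟩ := h2
  exact ⟨w.append w', by rw [SimpleGraph.Walk.length_append]; omega⟩

theorem R.symm {a : ℕ} {g h : RAAG Γ} (h1 : R Γ m a g h) : R Γ m a h g := by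
  obtain ⟨w, hw⟩ := h1
  exact ⟨w.reverse, by simpa using hw⟩

theorem R.mono {a b : ℕ} {g h : RAAG Γ} (h1 : R Γ m a g h) (hab : a ≤ b) : R Γ m b g h := by
  obtain ⟨w, hw⟩ := h1
  exact ⟨w, hw.trans hab⟩

theorem R.refl (a : ℕ) (g : RAAG Γ) : R Γ m a g g := ⟨.nil, by simp⟩

theorem R.step {g s : RAAG Γ} (hs : wordLength Γ s = 1) (h1 : m ≤ wordLength Γ g)
    (h2 : m ≤ wordLength Γ (g * s)) : R Γ m 1 g (g * s) :=
  ⟨.cons (show (H Γ m).Adj g (g * s) from ⟨by simpa using hs, h1, h2⟩) .nil, by simp⟩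

theorem R.line {g s : RAAG Γ} (hs : wordLength Γ s = 1) (n : ℕ)
    (h : ∀ k ≤ n, m ≤ wordLength Γ (g * s ^ k)) : R Γ m n g (g * s ^ n) := by
  induction n with
  | zero => simpa using R.refl 0 g
  | succ n ih =>
    have h1 := ih (fun k hk => h k (by omega))
    have h2 := R.step (m := m) (g := g * s ^ n) hs (h n (by omega))
      (by rw [mul_assoc, ← pow_succ]; exact h _ le_rfl)
    rw [mul_assoc, ← pow_succ] at h2
    exact h1.trans h2

theorem R.zline {g : RAAG Γ} (u : V) (k : ℤ)
    (h : ∀ k : ℤ, m ≤ wordLength Γ (g * gen Γ u ^ k)) :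
    R Γ m k.natAbs g (g * gen Γ u ^ k) := by
  obtain ⟨n, rfl | rfl⟩ := k.eq_nat_or_neg
  · have := R.line (m := m) (g := g) (wl_gen Γ u) n (fun k _ => by simpa using h k)
    simpa using this
  · have := R.line (m := m) (g := g) ((wl_inv Γ _).trans (wl_gen Γ u)) n
      (fun k _ => by simpa using h (-k))
    simpa using this

theorem low {g : RAAG Γ} {v w : V} (hvw : w ≠ v) (a : ℤ) (b : ℤ)
    (h : wordLength Γ g + m ≤ a.natAbs) :
    m ≤ wordLength Γ (g * gen Γ v ^ a * gen Γ w ^ b) := by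
  have h1 := ex_le Γ v (g * gen Γ v ^ a * gen Γ w ^ b)
  have h2 := ex_le Γ v g
  rw [ex_mul, ex_mul, ex_zpow, ex_zpow, ex_gen_self, ex_gen_ne Γ v w hvw] at h1
  simp only [mul_one, mul_zero, add_zero] at h1
  rw [abs_le] at h1 h2
  omega

theorem comm {v w : V} (h : Γ.Adj v w) : Commute (gen Γ v) (gen Γ w) := by
  have : (PresentedGroup.mk (raagRels Γ)) (FreeGroup.of v * FreeGroup.of w *
      (FreeGroup.of v)⁻¹ * (FreeGroup.of w)⁻¹) = 1 :=
    PresentedGroup.one_of_mem ⟨v, w, h, rfl⟩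
  simp only [map_mul, map_inv] at this
  rw [mul_inv_eq_one, mul_inv_eq_iff_eq_mul] at this
  exact this

theorem legA {g : RAAG Γ} {v w : V} (hvw : Γ.Adj v w) (a b : ℤ) (N : ℕ) (ha : a.natAbs = N)
    (hb : b.natAbs = N) (h : wordLength Γ g + m ≤ N) :
    R Γ m (2 * N) (g * gen Γ v ^ a) (g * gen Γ w ^ b) := by
  have h1 := R.zline (m := m) (g := g * gen Γ v ^ a) w b
    (fun k => low hvw.ne' a k (by omega))
  have h2 := R.zline (m := m) (g := g * gen Γ w ^ b) v a
    (fun k => low hvw.ne b k (by omega))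
  have hc : g * gen Γ w ^ b * gen Γ v ^ a = g * gen Γ v ^ a * gen Γ w ^ b := by
    rw [mul_assoc, mul_assoc, ((comm hvw).zpow_zpow a b).eq]
  rw [hc] at h2
  exact (h1.trans h2.symm).mono (by omega)

theorem legW {g : RAAG Γ} {v w : V} (p : Γ.Walk v w) (N : ℕ)
    (h : wordLength Γ g + m ≤ N) :
    R Γ m (2 * N * p.length) (g * gen Γ v ^ (N : ℤ)) (g * gen Γ w ^ (N : ℤ)) := by
  induction p with
  | nil => exact R.refl _ _
  | cons hadj p ih =>
    refine ((legA hadj N N N (by simp) (by simp) h).trans ih).mono ?_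
    rw [SimpleGraph.Walk.length_cons]; exact le_of_eq (by ring)

theorem legB [Fintype V] (hcon : Γ.Connected) {g : RAAG Γ} (v w : V) (N : ℕ)
    (h : wordLength Γ g + m ≤ N) :
    R Γ m (2 * N * Fintype.card V) (g * gen Γ v ^ (N : ℤ)) (g * gen Γ w ^ (N : ℤ)) := by
  classical
  obtain ⟨p⟩ := hcon.preconnected v w
  have := p.toPath.2.length_lt
  exact (legW (p.toPath : Γ.Walk v w) N h).mono (Nat.mul_le_mul_left _ this.le)

theorem legC [Fintype V] (hcon : Γ.Connected) (v : V) (N r : ℕ) (hN : r + m ≤ N)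
    (l : List (RAAG Γ)) (hr : l.length ≤ r)
    (hl : ∀ x ∈ l, x ∈ Set.range (gen Γ) ∨ x⁻¹ ∈ Set.range (gen Γ)) :
    R Γ m (l.length * (4 * N * Fintype.card V + 1)) (l.prod * gen Γ v ^ (N : ℤ))
      (gen Γ v ^ (N : ℤ)) := by
  induction l using List.reverseRecOn with
  | nil => simpa using R.refl 0 _
  | append_singleton l s ih =>
    have hl' : ∀ x ∈ l, x ∈ Set.range (gen Γ) ∨ x⁻¹ ∈ Set.range (gen Γ) :=
      fun x hx => hl x (by simp [hx])
    have ih := ih (by simp at hr; omega) hl'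
    have w1 := wl_le Γ _ hl
    have w2 := wl_le Γ _ hl'
    simp only [List.length_append, List.length_singleton] at hr w1 ⊢
    have key : ∃ u : V, ∃ t : RAAG Γ, wordLength Γ t = 1 ∧ Commute t (gen Γ u) ∧ s = t := by
      rcases hl s (by simp) with ⟨u, hu⟩ | ⟨u, hu⟩
      · exact ⟨u, gen Γ u, wl_gen Γ u, Commute.refl _, hu.symm⟩
      · exact ⟨u, (gen Γ u)⁻¹, (wl_inv Γ _).trans (wl_gen Γ u), (Commute.refl _).inv_left,
          by rw [hu, inv_inv]⟩
    obtain ⟨u, t, ht, hc, rfl⟩ := key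
    have a1 := legB (m := m) hcon (g := (l ++ [s]).prod) v u N (by omega)
    have a2 := legB (m := m) hcon (g := l.prod) u v N (by omega)
    have low' : ∀ g : RAAG Γ, wordLength Γ g + m ≤ N →
        m ≤ wordLength Γ (g * gen Γ u ^ (N : ℤ)) := by
      intro g hg
      have h1 := ex_le Γ u (g * gen Γ u ^ (N : ℤ))
      have h2 := ex_le Γ u g
      rw [ex_mul, ex_zpow, ex_gen_self] at h1
      rw [abs_le] at h1 h2
      omega
    have e : (l ++ [s]).prod * gen Γ u ^ (N : ℤ) = l.prod * gen Γ u ^ (N : ℤ) * s := by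
      rw [List.prod_append, List.prod_singleton, mul_assoc, mul_assoc, (hc.zpow_right N).eq]
    have a3 := R.step (m := m) (g := l.prod * gen Γ u ^ (N : ℤ)) ht (low' _ (by omega))
      (by rw [← e]; exact low' _ (by omega))
    rw [← e] at a3
    refine (((a1.trans a3.symm).trans a2).trans ih).mono (le_of_eq ?_)
    ring

theorem legD (v : V) (r : ℕ) (hm : 2 * m ≤ r + 1) (x : RAAG Γ) (hx : wordLength Γ x = r) :
    (∀ k : ℕ, m ≤ wordLength Γ (x * gen Γ v ^ k)) ∨
    (∀ k : ℕ, m ≤ wordLength Γ (x * (gen Γ v)⁻¹ ^ k)) := by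
  by_contra! hcon
  obtain ⟨⟨a, ha⟩, ⟨b, hb⟩⟩ := hcon
  have key : ∀ s : RAAG Γ, wordLength Γ s = 1 → ∀ k : ℕ, wordLength Γ (s ^ k) ≤ k := by
    intro s hs k
    induction k with
    | zero => simp [wl_one]
    | succ k ih => rw [pow_succ]; exact (wl_mul Γ _ _).trans (by omega)
  have hi : wordLength Γ (gen Γ v)⁻¹ = 1 := (wl_inv Γ _).trans (wl_gen Γ v)
  have h1 := wl_mul Γ (x * gen Γ v ^ a) ((gen Γ v)⁻¹ ^ a)
  have h2 := wl_mul Γ (x * (gen Γ v)⁻¹ ^ b) (gen Γ v ^ b)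
  have h3 := wl_mul Γ (x * (gen Γ v)⁻¹ ^ b)⁻¹ (x * gen Γ v ^ a)
  have h4 := ex_le Γ v ((x * (gen Γ v)⁻¹ ^ b)⁻¹ * (x * gen Γ v ^ a))
  have e1 : x * gen Γ v ^ a * (gen Γ v)⁻¹ ^ a = x := by simp
  have e2 : x * (gen Γ v)⁻¹ ^ b * gen Γ v ^ b = x := by simp
  have e3 : ex Γ v ((x * (gen Γ v)⁻¹ ^ b)⁻¹ * (x * gen Γ v ^ a)) = a + b := by
    have p1 := ex_zpow Γ v (gen Γ v) a
    have p2 := ex_zpow Γ v (gen Γ v)⁻¹ b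
    rw [zpow_natCast] at p1 p2
    rw [ex_mul, ex_inv, ex_mul, ex_mul, p1, p2, ex_inv, ex_gen_self]
    ring
  rw [e1] at h1
  rw [e2] at h2
  rw [wl_inv] at h3
  rw [e3, abs_le] at h4
  have := key _ (wl_gen Γ v) b
  have := key _ hi a
  omega

theorem legE [Fintype V] (hcon : Γ.Connected) {v u : V} (huv : Γ.Adj v u) (r N : ℕ)
    (hm : 2 * m ≤ r + 1) (hN : r + m ≤ N) (x : RAAG Γ) (hx : wordLength Γ x = r) :
    R Γ m (5 * N + r * (4 * N * Fintype.card V + 1)) x (gen Γ v ^ (N : ℤ)) := by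
  obtain ⟨l, h1, h2, h3⟩ := exists_word Γ x
  have c := legC (m := m) hcon v N r hN l (by omega) h2
  rw [h1, h3, hx] at c
  refine R.trans ?_ c
  rcases legD v r hm x hx with h | h
  · have := R.line (m := m) (wl_gen Γ v) N (fun k _ => h k)
    rw [zpow_natCast]
    exact this.mono (by omega)
  · have a := R.line (m := m) ((wl_inv Γ _).trans (wl_gen Γ v)) N (fun k _ => h k)
    have b := legA (m := m) (g := x) huv (-N) N N (by simp) (by simp) (by omega)
    have c := legA (m := m) (g := x) huv.symm N N N (by simp) (by simp) (by omega)
    rw [inv_pow, ← zpow_natCast, ← zpow_neg] at a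
    exact ((a.trans b).trans c).mono (by omega)

end RAAGDiv

theorem raag_quadratic_upper_divergence {V : Type*} [Fintype V]
    (Γ : SimpleGraph V) (hV : 1 < Fintype.card V) (hcon : Γ.Connected) :
    ∃ C : ℝ, 1 ≤ C ∧
      ∀ (r : ℕ) (x y : RAAG Γ),
        RAAG.wordLength Γ x = r → RAAG.wordLength Γ y = r →
        ∃ (L : ℕ) (p : ℕ → RAAG Γ),
          (L : ℝ) ≤ C * (r : ℝ) ^ 2 + C ∧ p 0 = x ∧ p L = y ∧
          (∀ i < L, RAAG.wordLength Γ ((p i)⁻¹ * p (i + 1)) = 1) ∧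
          (∀ i ≤ L, (r : ℝ) / C ≤ (RAAG.wordLength Γ (p i) : ℝ)) := by
  obtain ⟨v, u, huv⟩ : ∃ v u : V, Γ.Adj v u := by
    haveI : Nontrivial V := Fintype.one_lt_card_iff_nontrivial.1 hV
    obtain ⟨v⟩ := hcon.nonempty
    exact ⟨v, hcon.preconnected.exists_adj_of_nontrivial v⟩
  refine ⟨100 * ((Fintype.card V : ℝ) + 1), ?_, ?_⟩
  · have : (0 : ℝ) ≤ Fintype.card V := by positivity
    linarith
  intro r x y hx hy
  have hm : 2 * ((r + 1) / 2) ≤ r + 1 := by omega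
  have e1 := RAAGDiv.legE (m := (r + 1) / 2) hcon huv r (2 * r + 1) hm (by omega) x hx
  have e2 := RAAGDiv.legE (m := (r + 1) / 2) hcon huv r (2 * r + 1) hm (by omega) y hy
  obtain ⟨w, hw⟩ := e1.trans e2.symm
  refine ⟨w.length, w.getVert, ?_, by simp, by simp, ?_, ?_⟩
  · have hw' : (w.length : ℝ) ≤ _ := Nat.cast_le.2 hw
    refine hw'.trans ?_
    have hr : (r : ℝ) ≤ (r : ℝ) ^ 2 := by exact_mod_cast Nat.le_self_pow (by norm_num) r
    have hD : (0 : ℝ) ≤ Fintype.card V := by positivity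
    have h3 := mul_le_mul_of_nonneg_left hr hD
    have h0 : (0 : ℝ) ≤ r := by positivity
    have h4 : (0 : ℝ) ≤ Fintype.card V * (r : ℝ) ^ 2 := by positivity
    push_cast
    nlinarith
  · intro i hi
    exact (w.adj_getVert_succ hi).1
  · intro i hi
    have hlow : (r + 1) / 2 ≤ RAAG.wordLength Γ (w.getVert i) := by
      rcases hi.lt_or_eq with h | h
      · exact (w.adj_getVert_succ h).2.1
      · rw [h, SimpleGraph.Walk.getVert_length, hy]; omega
    have h2 : r ≤ 2 * RAAG.wordLength Γ (w.getVert i) := by omega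
    have h2' : (r : ℝ) ≤ 2 * (RAAG.wordLength Γ (w.getVert i) : ℝ) := by exact_mod_cast h2
    have hD : (0 : ℝ) ≤ Fintype.card V := by positivity
    rw [div_le_iff₀ (by positivity)]
    have h5 : (0 : ℝ) ≤ (RAAG.wordLength Γ (w.getVert i) : ℝ) := by positivity
    nlinarith [mul_nonneg h5 hD]
end
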